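/- arXiv:1809.10439 — 14 statements merged into one kernel-verified Lean document; each statement's English description precedes it below -/
import Mathlib

section
/- Let b be a nonzero complex number. For every z ∈ ℂ with b² + 1 − 2bz ≠ 0, the quotient (z − b)²/(b² + 1 − 2bz) is a real number lying in [0,1] if and only if there exist ρ ∈ [0,1] and s ∈ ℂ with s² = ρ(1 − b² + b²ρ) and z = b(1 − ρ) + s. -/
/-- For `b ≠ 0` and `z` with `b² + 1 − 2bz ≠ 0`, the quotient
`(z − b)² / (b² + 1 − 2bz)` is a real number in `[0,1]` iff there exist `ρ ∈ [0,1]` and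
`s ∈ ℂ` with `s² = ρ(1 − b² + b²ρ)` and `z = b(1 − ρ) + s`. -/
theorem stmt_1 (b : ℂ) (hb : b ≠ 0) :
    ∀ z : ℂ, b ^ 2 + 1 - 2 * b * z ≠ 0 →
      ((∃ r : ℝ, r ∈ Set.Icc (0 : ℝ) 1 ∧
          (z - b) ^ 2 / (b ^ 2 + 1 - 2 * b * z) = (r : ℂ)) ↔
        (∃ ρ : ℝ, ρ ∈ Set.Icc (0 : ℝ) 1 ∧ ∃ s : ℂ,
          s ^ 2 = (ρ : ℂ) * (1 - b ^ 2 + b ^ 2 * (ρ : ℂ)) ∧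
          z = b * (1 - (ρ : ℂ)) + s)) := by
  intro z hz
  constructor
  · rintro ⟨r, hr, h⟩
    rw [div_eq_iff hz] at h
    refine ⟨r, hr, z - b * (1 - (r : ℂ)), ?_, by ring⟩
    linear_combination h
  · rintro ⟨r, hr, s, hs, h⟩
    refine ⟨r, hr, ?_⟩
    rw [div_eq_iff hz]
    subst h
    linear_combination hs
end

section
/- Let b ∈ ℂ with Re b < 0. Then 1/b belongs to the set 𝒜 = {z ∈ ℂ : ∃ρ ∈ [0,1], ∃s ∈ ℂ, s² = ρ(1 − b² + b²ρ) and z = b(1 − ρ) + s} if and only if b is real and b ≤ −1. -/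
/-- Let `b ∈ ℂ` with `Re b < 0`. Then `1/b` belongs to the set
`𝒜 = {z : ∃ ρ ∈ [0,1], ∃ s, s² = ρ(1 − b² + b²ρ) ∧ z = b(1 − ρ) + s}` iff `b` is real
and `b ≤ −1`. -/
theorem stmt_2 (b : ℂ) (hb : b.re < 0)
    (A : Set ℂ)
    (hA : A = {z : ℂ | ∃ ρ : ℝ, ρ ∈ Set.Icc (0 : ℝ) 1 ∧ ∃ s : ℂ,
      s ^ 2 = (ρ : ℂ) * (1 - b ^ 2 + b ^ 2 * (ρ : ℂ)) ∧ z = b * (1 - (ρ : ℂ)) + s}) :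
    1 / b ∈ A ↔ (b.im = 0 ∧ b.re ≤ -1) := by
  have hb0 : b ≠ 0 := by
    rintro rfl
    simp at hb
  subst hA
  constructor
  · rintro ⟨ρ, ⟨h0, h1⟩, s, hs, hz⟩
    have key : ∃ t : ℝ, t ≤ 1 ∧ 0 ≤ t ∧ b ^ 2 * (t : ℂ) = 1 := by
      have hz' : 1 = b * (b * (1 - (ρ : ℂ)) + s) := by
        rw [← hz]; field_simp
      have h : (b ^ 2 - 1) * (b ^ 2 * (1 - (ρ : ℂ)) - 1) = 0 := by
        have e : b * s = 1 - b ^ 2 * (1 - (ρ : ℂ)) := by linear_combination -hz'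
        have e2 : (b * s) ^ 2 = b ^ 2 * ((ρ : ℂ) * (1 - b ^ 2 + b ^ 2 * (ρ : ℂ))) := by
          rw [← hs]; ring
        rw [e] at e2
        linear_combination e2
      rcases mul_eq_zero.mp h with h | h
      · exact ⟨1, le_refl _, zero_le_one, by push_cast; linear_combination h⟩
      · exact ⟨1 - ρ, by linarith, by linarith, by push_cast; linear_combination h⟩
    obtain ⟨t, ht1, ht0, h⟩ := key
    have hre := congrArg Complex.re h
    have him := congrArg Complex.im h
    simp [pow_two] at hre him
    have ht : t ≠ 0 := by
      rintro rfl
      simp at hre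
    have hy : b.im = 0 := by
      rcases him with him | him
      · have : b.re * b.im = 0 := by linarith
        rcases mul_eq_zero.mp this with h | h
        · linarith
        · exact h
      · exact absurd him ht
    refine ⟨hy, ?_⟩
    rw [hy] at hre
    nlinarith [mul_nonneg (sub_nonneg.mpr ht1) (sq_nonneg b.re)]
  · rintro ⟨hy, hx⟩
    have hbx : b = (b.re : ℂ) := by
      apply Complex.ext <;> simp [hy]
    have hx2 : 1 ≤ b.re ^ 2 := by nlinarith
    refine ⟨1 - (b.re ^ 2)⁻¹, ⟨by linarith [inv_le_one_of_one_le₀ hx2], by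
      linarith [inv_nonneg.mpr (sq_nonneg b.re)]⟩, 0, ?_, ?_⟩
    · push_cast
      rw [← hbx]
      field_simp
      ring
    · push_cast
      rw [← hbx]
      field_simp
      ring
end

section
/- Let b ∈ ℂ with Re b < 0. The intersection 𝒜 ∩ C_b is nonempty if and only if Re b ≤ −1/2; moreover, when it is nonempty it consists of exactly one point i_b. -/
open ComplexConjugate in
/-- Points of the intersection: the key algebra. -/
theorem key_forward (b z c s : ℂ) (ρ : ℝ) (hb : b.re < 0) (h0 : 0 ≤ ρ) (h1 : ρ ≤ 1)
    (hc : c = (b + 1 / b) / 2)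
    (hs : s ^ 2 = (ρ : ℂ) * (1 - b ^ 2 + b ^ 2 * (ρ : ℂ))) (hz : z = b * (1 - (ρ : ℂ)) + s)
    (hn : ‖z - c‖ = ‖b‖ / 2) :
    z = (b + (1 - conj b ^ 2) / b) / 2 ∧ b.re ≤ -1/2 := by
  have hb0 : b ≠ 0 := by rintro rfl; simp at hb
  obtain ⟨y, hy⟩ := IsAlgClosed.exists_pow_nat_eq (b ^ 2 + 1 - 2 * b * z) (n := 2) (by norm_num)
  have hm : y ^ 2 = -(2 * b) * (z - c) := by rw [hy, hc]; field_simp; ring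
  have hny : ‖y‖ = ‖b‖ := by
    have h := congrArg norm hm
    rw [norm_pow, norm_mul, norm_neg, norm_mul, hn] at h
    have h2 : ‖y‖ ^ 2 = ‖b‖ ^ 2 := by rw [h]; simp; ring
    exact (sq_eq_sq₀ (norm_nonneg _) (norm_nonneg _)).1 h2
  have hr : ((Real.sqrt ρ : ℝ) : ℂ) ^ 2 = (ρ : ℂ) := by
    rw [← Complex.ofReal_pow, Real.sq_sqrt h0]
  have hsq : (1 - b ^ 2 - y ^ 2) ^ 2 = (2 * (Real.sqrt ρ : ℝ) * b * y) ^ 2 := by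
    have e : (2 * ((Real.sqrt ρ : ℝ) : ℂ) * b * y) ^ 2 = 4 * ρ * b ^ 2 * y ^ 2 := by
      rw [← hr]; ring
    have hs' : s = z - b * (1 - ρ) := by rw [hz]; ring
    rw [hs'] at hs
    rw [e, hy]
    linear_combination 4 * b ^ 2 * hs
  obtain ⟨t, ht, hty⟩ : ∃ t : ℝ, t ^ 2 = ρ ∧ 1 - b ^ 2 - y ^ 2 = 2 * (t : ℂ) * b * y := by
    rcases sq_eq_sq_iff_eq_or_eq_neg.1 hsq with h | h
    · exact ⟨Real.sqrt ρ, Real.sq_sqrt h0, h⟩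
    · exact ⟨-Real.sqrt ρ, by rw [neg_sq, Real.sq_sqrt h0], by rw [h]; push_cast; ring⟩
  have hN : y * conj y = b * conj b := by
    rw [Complex.mul_conj, Complex.mul_conj, Complex.normSq_eq_norm_sq,
      Complex.normSq_eq_norm_sq, hny]
  have hty' : 1 - conj b ^ 2 - conj y ^ 2 = 2 * (t : ℂ) * conj b * conj y := by
    have := congrArg conj hty
    have h2 : conj (2 : ℂ) = 2 := Complex.conj_ofNat 2
    simpa [h2] using this
  have hreal : b * y = conj b * conj y := by
    linear_combination (b * y) * hty' - (conj b * conj y) * hty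
      + (b * conj y - conj b * y) * hN
  have hy2 : y ^ 2 = conj b ^ 2 := by
    apply mul_left_cancel₀ hb0
    linear_combination y * hreal + conj b * hN
  constructor
  · rw [← hy2, hy]; field_simp; ring
  · have hk : (1 - b ^ 2 - conj b ^ 2) ^ 2 = 4 * ((t ^ 2 : ℝ) : ℂ) * (b * conj b) ^ 2 := by
      rw [← hy2, hty]; push_cast
      linear_combination (4 * t ^ 2 * b ^ 2) * hy2
    rw [ht] at hk
    have hk2 := congrArg Complex.re hk
    simp [pow_two] at hk2
    have hk3 : (1 - 2 * (b.re ^ 2 - b.im ^ 2)) ^ 2 = 4 * ρ * (b.re ^ 2 + b.im ^ 2) ^ 2 := by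
      linear_combination hk2
    have hle : (1 - 2 * (b.re ^ 2 - b.im ^ 2)) ^ 2 ≤ 4 * (b.re ^ 2 + b.im ^ 2) ^ 2 := by
      rw [hk3]; nlinarith [sq_nonneg (b.re ^ 2 + b.im ^ 2)]
    have h3 : 0 ≤ (4 * b.im ^ 2 + 1) * (4 * b.re ^ 2 - 1) := by nlinarith
    have h4 : 0 ≤ 4 * b.re ^ 2 - 1 := nonneg_of_mul_nonneg_right h3 (by positivity)
    nlinarith

open ComplexConjugate in
/-- Existence. -/
theorem key_backward (b : ℂ) (hb : b.re ≤ -1/2) :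
    ∃ ρ : ℝ, ρ ∈ Set.Icc (0 : ℝ) 1 ∧ ∃ s : ℂ,
      s ^ 2 = (ρ : ℂ) * (1 - b ^ 2 + b ^ 2 * (ρ : ℂ)) ∧
      (b + (1 - conj b ^ 2) / b) / 2 = b * (1 - (ρ : ℂ)) + s := by
  have hb0 : b ≠ 0 := by rintro rfl; norm_num at hb
  have hB0 : conj b ≠ 0 := by simpa using hb0
  have hx : 1 / 4 ≤ b.re ^ 2 := by nlinarith
  have hNpos : 0 < b.re ^ 2 + b.im ^ 2 := by nlinarith [sq_nonneg b.im]
  refine ⟨((1 - 2 * (b.re ^ 2 - b.im ^ 2)) / (2 * (b.re ^ 2 + b.im ^ 2))) ^ 2,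
    ⟨by positivity, ?_⟩, ?_⟩
  · rw [div_pow, div_le_one (by positivity)]
    nlinarith [mul_nonneg (by positivity : 0 ≤ 4 * b.im ^ 2 + 1) (by linarith : 0 ≤ 4 * b.re ^ 2 - 1)]
  · have e : (((((1 - 2 * (b.re ^ 2 - b.im ^ 2)) / (2 * (b.re ^ 2 + b.im ^ 2))) ^ 2 : ℝ)) : ℂ)
        = ((1 - b ^ 2 - conj b ^ 2) / (2 * (b * conj b))) ^ 2 := by
      have e1 : 1 - b ^ 2 - conj b ^ 2 = ((1 - 2 * (b.re ^ 2 - b.im ^ 2) : ℝ) : ℂ) := by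
        apply Complex.ext <;> simp [pow_two] <;> ring
      have e2 : b * conj b = ((b.re ^ 2 + b.im ^ 2 : ℝ) : ℂ) := by
        apply Complex.ext <;> simp [pow_two] <;> ring
      rw [e1, e2]; push_cast; rfl
    rw [e]
    refine ⟨(b + (1 - conj b ^ 2) / b) / 2 -
      b * (1 - ((1 - b ^ 2 - conj b ^ 2) / (2 * (b * conj b))) ^ 2), ?_, by ring⟩
    field_simp
    ring


/-- Let `b ∈ ℂ` with `Re b < 0`. The intersection `𝒜 ∩ C_b` is nonempty iff
`Re b ≤ −1/2`; moreover, when it is nonempty it consists of exactly one point `i_b`. -/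
theorem stmt_3 (b : ℂ) (hb : b.re < 0)
    (A : Set ℂ)
    (hA : A = {z : ℂ | ∃ ρ : ℝ, ρ ∈ Set.Icc (0 : ℝ) 1 ∧ ∃ s : ℂ,
      s ^ 2 = (ρ : ℂ) * (1 - b ^ 2 + b ^ 2 * (ρ : ℂ)) ∧ z = b * (1 - (ρ : ℂ)) + s})
    (c : ℂ) (hc : c = (b + 1 / b) / 2)
    (Cb : Set ℂ) (hCb : Cb = {z : ℂ | ‖z - c‖ = ‖b‖ / 2}) :
    ((A ∩ Cb).Nonempty ↔ b.re ≤ -1/2) ∧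
      (b.re ≤ -1/2 → ∃ ib : ℂ, A ∩ Cb = {ib}) := by
  have fwd : ∀ z ∈ A ∩ Cb, z = (b + (1 - (starRingEnd ℂ) b ^ 2) / b) / 2 ∧ b.re ≤ -1/2 := by
    rintro z ⟨h1, h2⟩
    rw [hA] at h1
    rw [hCb] at h2
    obtain ⟨ρ, ⟨h0, h1⟩, s, hs, hz⟩ := h1
    exact key_forward b z c s ρ hb h0 h1 hc hs hz h2
  have bwd : b.re ≤ -1/2 → (b + (1 - (starRingEnd ℂ) b ^ 2) / b) / 2 ∈ A ∩ Cb := by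
    intro h
    refine ⟨by rw [hA]; exact key_backward b h, ?_⟩
    have hb0 : b ≠ 0 := by rintro rfl; simp at hb
    have hn0 : ‖b‖ ≠ 0 := by simpa using hb0
    rw [hCb, Set.mem_setOf_eq, hc]
    have e : (b + (1 - (starRingEnd ℂ) b ^ 2) / b) / 2 - (b + 1 / b) / 2
        = -((starRingEnd ℂ) b ^ 2 / b / 2) := by ring
    rw [e, norm_neg, norm_div, norm_div, norm_pow, RCLike.norm_conj]
    simp
    field_simp
  refine ⟨⟨fun ⟨z, hz⟩ => (fwd z hz).2, fun h => ⟨_, bwd h⟩⟩, fun h =>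
    ⟨_, Set.eq_singleton_iff_unique_mem.2 ⟨bwd h, fun z hz => (fwd z hz).1⟩⟩⟩
end

section
/- Let b be real with b ≤ −1/2. Then 𝒜 ∩ C_b = {1/(2b)}, i.e., the unique intersection point of the arc 𝒜 and the circle C_b is i_b = 1/(2b). -/
/-- Let `b` be real with `b ≤ −1/2`. Then `𝒜 ∩ C_b = {1/(2b)}`: the unique
intersection point of the arc `𝒜` and the circle `C_b` is `i_b = 1/(2b)`. -/
theorem stmt_4 (b : ℝ) (hb : b ≤ -1/2)
    (A : Set ℂ)
    (hA : A = {z : ℂ | ∃ ρ : ℝ, ρ ∈ Set.Icc (0 : ℝ) 1 ∧ ∃ s : ℂ,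
      s ^ 2 = (ρ : ℂ) * (1 - (b : ℂ) ^ 2 + (b : ℂ) ^ 2 * (ρ : ℂ)) ∧
      z = (b : ℂ) * (1 - (ρ : ℂ)) + s})
    (c : ℂ) (hc : c = ((b : ℂ) + 1 / (b : ℂ)) / 2)
    (Cb : Set ℂ) (hCb : Cb = {z : ℂ | ‖z - c‖ = ‖(b : ℂ)‖ / 2}) :
    A ∩ Cb = {(1 / (2 * b) : ℂ)} := by
  have hb0 : b < 0 := by linarith
  have hbne : b ≠ 0 := hb0.ne
  have hbC : (b : ℂ) ≠ 0 := by exact_mod_cast hbne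
  have hb2 : 1 ≤ 4 * b ^ 2 := by nlinarith
  subst hA hc hCb
  ext z
  simp only [Set.mem_inter_iff, Set.mem_setOf_eq, Set.mem_singleton_iff]
  constructor
  · rintro ⟨⟨ρ, ⟨h0, h1⟩, s, hs, rfl⟩, hn⟩
    obtain ⟨u, v⟩ := s
    have hre := congrArg Complex.re hs
    have him := congrArg Complex.im hs
    simp [pow_two] at hre him
    obtain ⟨t, ht⟩ : ∃ t : ℝ, t = 1 / b := ⟨_, rfl⟩
    have htb : t * b = 1 := by rw [ht]; field_simp
    have htC : (1 / (b : ℂ)) = (t : ℂ) := by rw [ht]; push_cast; rfl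
    have hgoal : (1 / (2 * b) : ℂ) = ((t / 2 : ℝ) : ℂ) := by
      rw [ht]; push_cast; field_simp
    rw [hgoal]
    rw [htC] at hn
    have hn2 : ‖(b : ℂ) * (1 - (ρ : ℂ)) + ⟨u, v⟩ - ((b : ℂ) + (t : ℂ)) / 2‖ ^ 2
        = (‖(b : ℂ)‖ / 2) ^ 2 := by rw [hn]
    have e : (b : ℂ) * (1 - (ρ : ℂ)) + ⟨u, v⟩ - ((b : ℂ) + (t : ℂ)) / 2
        = ⟨b * (1 - ρ) + u - (b + t) / 2, v⟩ := by
      have : ((b : ℂ) + (t : ℂ)) / 2 = (((b + t) / 2 : ℝ) : ℂ) := by push_cast; rfl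
      rw [this]
      apply Complex.ext <;> simp
    rw [e, Complex.sq_norm, Complex.normSq_mk, div_pow, Complex.norm_real, Real.norm_eq_abs,
      sq_abs] at hn2
    have huv : u = 0 ∨ v = 0 := by
      rw [← mul_eq_zero]; linarith
    have ht2 : 0 < t ^ 2 := by
      have : t ≠ 0 := by rintro rfl; simp at htb
      positivity
    have hv : v = 0 := by
      rcases huv with rfl | h
      · have h3 : t ^ 2 = 2 := by
          linear_combination 4 * hn2 + 4 * hre + (2 - 4 * ρ) * htb
        have h4 : b ^ 2 = 1 / 2 := by
          have : t ^ 2 * b ^ 2 = 1 := by rw [← mul_pow, htb, one_pow]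
          rw [h3] at this; linarith
        have : v ^ 2 = - (ρ * (1 / 2 + ρ / 2)) := by
          linear_combination - hre + (ρ - ρ ^ 2) * h4
        have h5 : 0 ≤ ρ * (1 / 2 + ρ / 2) := by positivity
        have : v ^ 2 = 0 := le_antisymm (by linarith) (sq_nonneg v)
        exact pow_eq_zero_iff (two_ne_zero) |>.1 this
      · exact h
    subst hv
    have hx : (b * (1 - ρ) + u - t / 2) * (b * (1 - ρ) + u - (b + t / 2)) = 0 := by
      linear_combination hn2
    rcases mul_eq_zero.1 hx with h | h
    · apply Complex.ext
      · simp; linarith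
      · simp
    · exfalso
      have hu : u = t / 2 + b * ρ := by linarith
      rw [hu] at hre
      have : t ^ 2 / 4 + b ^ 2 * ρ = 0 := by
        linear_combination hre - ρ * htb
      have : 0 ≤ b ^ 2 * ρ := by positivity
      linarith
  · rintro rfl
    refine ⟨⟨(1 - 2 * b ^ 2) ^ 2 / (4 * b ^ 4), ⟨by positivity, ?_⟩,
      1 / (2 * b) - b * (1 - (1 - 2 * b ^ 2) ^ 2 / (4 * b ^ 4)), ?_, ?_⟩, ?_⟩
    · rw [div_le_one (by positivity)]
      nlinarith
    · push_cast
      field_simp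
      ring
    · push_cast
      ring
    · have : (1 / (2 * b) : ℂ) - ((b : ℂ) + 1 / b) / 2 = -(b / 2) := by
        field_simp
        ring
      rw [this, norm_neg, norm_div]
      simp
end

section
/- Let b ∈ ℂ with Re b = −1/2. Then 𝒜 ∩ C_b = {−1}, i.e., when R cos θ = 3/2 the arc 𝒜 and the circle C_b intersect exactly at the point −1. -/
/-- Let `b ∈ ℂ` with `Re b = −1/2`. Then `𝒜 ∩ C_b = {−1}`: when
`R cos θ = 3/2` the arc `𝒜` and the circle `C_b` intersect exactly at the point `−1`. -/
theorem stmt_5 (b : ℂ) (hb : b.re = -1/2)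
    (A : Set ℂ)
    (hA : A = {z : ℂ | ∃ ρ : ℝ, ρ ∈ Set.Icc (0 : ℝ) 1 ∧ ∃ s : ℂ,
      s ^ 2 = (ρ : ℂ) * (1 - b ^ 2 + b ^ 2 * (ρ : ℂ)) ∧ z = b * (1 - (ρ : ℂ)) + s})
    (c : ℂ) (hc : c = (b + 1 / b) / 2)
    (Cb : Set ℂ) (hCb : Cb = {z : ℂ | ‖z - c‖ = ‖b‖ / 2}) :
    A ∩ Cb = {(-1 : ℂ)} := by
  have hb0 : b ≠ 0 := by
    rintro rfl
    norm_num at hb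
  obtain ⟨B, hBdef⟩ : ∃ B, B = (starRingEnd ℂ) b := ⟨_, rfl⟩
  have hB : B = -1 - b := by
    rw [hBdef]
    apply Complex.ext
    · simp [hb]; norm_num
    · simp
  have hbn : b * B = ((‖b‖ ^ 2 : ℝ) : ℂ) := by
    rw [hBdef, Complex.mul_conj, Complex.normSq_eq_norm_sq]
  have hbpos : 0 < ‖b‖ := norm_pos_iff.mpr hb0
  -- the circle in terms of `W = 2 b z - b ^ 2 - 1`
  have circ : ∀ z : ℂ, ‖z - c‖ = ‖b‖ / 2 ↔ ‖2 * b * z - b ^ 2 - 1‖ = ‖b‖ ^ 2 := by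
    intro z
    have h1 : 2 * b * z - b ^ 2 - 1 = 2 * b * (z - c) := by
      rw [hc]; field_simp; ring
    rw [h1, norm_mul, norm_mul, Complex.norm_ofNat]
    constructor
    · intro h; rw [h]; ring
    · intro h
      apply mul_left_cancel₀ (mul_pos two_pos hbpos).ne'
      rw [h]; ring
  subst hA hCb
  ext z
  simp only [Set.mem_inter_iff, Set.mem_setOf_eq, Set.mem_singleton_iff, circ]
  constructor
  · rintro ⟨⟨ρ, ⟨hρ0, hρ1⟩, s, hs, hz⟩, hW⟩
    obtain ⟨W, hWdef⟩ : ∃ W, W = 2 * b * z - b ^ 2 - 1 := ⟨_, rfl⟩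
    rw [← hWdef] at hW
    obtain ⟨X, hX⟩ : ∃ X, X = W + 1 - b ^ 2 := ⟨_, rfl⟩
    have hs' : s = z - b * (1 - (ρ : ℂ)) := by rw [hz]; ring
    rw [hs'] at hs
    have hX2 : X ^ 2 = -4 * ρ * b ^ 2 * W := by
      rw [hX, hWdef]
      linear_combination 4 * b ^ 2 * hs
    have hXn : ‖X‖ ^ 2 = 4 * ρ * (‖b‖ ^ 2) ^ 2 := by
      have := congrArg norm hX2
      simp only [norm_mul, norm_pow, norm_neg, Complex.norm_ofNat, Complex.norm_real,
        Real.norm_of_nonneg hρ0, hW] at this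
      rw [this]; ring
    have hXX : X * (starRingEnd ℂ) X = 4 * ρ * (b * B) ^ 2 := by
      rw [Complex.mul_conj, Complex.normSq_eq_norm_sq, hXn, hbn]
      push_cast; ring
    have hWW : W * (starRingEnd ℂ) W = (b * B) ^ 2 := by
      rw [Complex.mul_conj, Complex.normSq_eq_norm_sq, hW, hbn]
      push_cast; ring
    have hXc : (starRingEnd ℂ) X = (starRingEnd ℂ) W + 1 - B ^ 2 := by
      rw [hX, hBdef]; simp
    have key : X * B ^ 2 + W * (starRingEnd ℂ) X = 0 := by
      by_cases h0 : X = 0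
      · simp [h0]
      · apply mul_left_cancel₀ h0
        linear_combination B ^ 2 * hX2 + W * hXX
    have hfin : W = -B ^ 2 := by
      rw [hXc, hX] at key
      linear_combination key - hWW
    rw [hB, hWdef] at hfin
    apply mul_left_cancel₀ (mul_ne_zero two_ne_zero hb0)
    linear_combination hfin
  · rintro rfl
    refine ⟨⟨1, ⟨zero_le_one, le_rfl⟩, -1, by push_cast; ring, by push_cast; ring⟩, ?_⟩
    have : 2 * b * (-1) - b ^ 2 - 1 = -B ^ 2 := by rw [hB]; ring
    rw [this, norm_neg, norm_pow, hBdef, Complex.norm_conj]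
end

section
/- Let b ∈ ℂ with Re b ≤ −1/2 (so Re b < 0). Define L_b = {z ∈ ℂ : ∃s ∈ ℂ, s² = z² − 1 and |b − z − s| = |b|}. Then L_b ∩ C_b consists of exactly one point; this point equals the unique point i_b of 𝒜 ∩ C_b; and moreover L_b ∩ 𝒜 = L_b ∩ C_b = {i_b}. -/
lemma aux_norm (u v : ℂ) (ρ : ℝ) (h0 : 0 ≤ ρ) (h1 : ρ ≤ 1)
    (h : (u + v) ^ 2 = 4 * ρ * (u * v)) : ‖u‖ = ‖v‖ := by
  by_cases hv : v = 0
  · subst hv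
    have : u = 0 := by simpa using h
    simp [this]
  obtain ⟨k, rfl⟩ : ∃ k, u = k * v := ⟨u / v, by field_simp⟩
  have hk : (k + 1) ^ 2 = 4 * ρ * k := by
    have : v ^ 2 * ((k + 1) ^ 2 - 4 * ρ * k) = 0 := by linear_combination h
    rcases mul_eq_zero.1 this with h | h
    · exact absurd (pow_eq_zero_iff (two_ne_zero) |>.1 h) hv
    · linear_combination h
  have hre := congrArg Complex.re hk
  have him := congrArg Complex.im hk
  simp [pow_two] at hre him
  have : ‖k‖ ^ 2 = 1 := by
    rw [← Complex.normSq_eq_norm_sq, Complex.normSq_apply]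
    by_cases hi : k.im = 0
    · rw [hi] at hre ⊢
      have ha : 0 ≤ k.re ∨ k.re = -1 := by
        by_contra! hc
        have : (k.re + 1) ^ 2 ≤ 0 := by nlinarith
        have : k.re + 1 = 0 := by nlinarith
        exact hc.2 (by linarith)
      rcases ha with ha | ha
      · have : (k.re - 1) ^ 2 ≤ 0 := by nlinarith [mul_nonneg (sub_nonneg.2 h1) ha]
        have : k.re - 1 = 0 := by nlinarith
        have : k.re = 1 := by linarith
        simp [this]
      · simp [ha]
    · have : k.re = 2 * ρ - 1 := by
        apply mul_left_cancel₀ hi; linarith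
      have h2 : ρ = (k.re + 1) / 2 := by linarith
      rw [h2] at hre
      nlinarith
  have : ‖k‖ = 1 := by
    rw [← sq_eq_sq₀ (norm_nonneg _) zero_le_one, this]; norm_num
  simp [this]

lemma aux_rho (u v : ℂ) (R : ℝ) (hR : 0 < R) (hu : ‖u‖ = R) (hv : ‖v‖ = R) :
    ∃ ρ : ℝ, ρ ∈ Set.Icc (0 : ℝ) 1 ∧ (u + v) ^ 2 = 4 * ρ * (u * v) := by
  refine ⟨‖u + v‖ ^ 2 / (4 * R ^ 2), ⟨by positivity, ?_⟩, ?_⟩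
  · rw [div_le_one (by positivity)]
    have := norm_add_le u v
    nlinarith [norm_nonneg (u + v)]
  · have e1 := Complex.mul_conj' u
    have e2 := Complex.mul_conj' v
    have e3 := Complex.mul_conj' (u + v)
    rw [hu] at e1
    rw [hv] at e2
    have hR' : (R : ℂ) ≠ 0 := by exact_mod_cast hR.ne'
    push_cast
    rw [← e3, map_add]
    field_simp
    linear_combination (-(u + v) * v) * e1 - (u + v) * u * e2

lemma aux_half (b w v : ℂ) (h : w * v = 1) (hw : ‖w - b‖ = ‖b‖) : (b * v).re = 1 / 2 := by
  have e1 := Complex.mul_conj' (w - b)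
  have e2 := Complex.mul_conj' b
  rw [hw, ← e2] at e1
  have h' := congrArg (starRingEnd ℂ) h
  simp only [map_mul, map_one, map_sub] at h' e1
  have : b * v + (starRingEnd ℂ) (b * v) = 1 := by
    rw [map_mul]
    linear_combination (-v * (starRingEnd ℂ) v) * e1 + ((starRingEnd ℂ) w * (starRingEnd ℂ) v
      - (starRingEnd ℂ) b * (starRingEnd ℂ) v) * h + (1 - b * v) * h'
  have := congrArg Complex.re this
  simp only [Complex.add_re, Complex.conj_re, Complex.one_re] at this
  linarith

lemma aux_exists (b : ℂ) (hb : b.re ≤ -1/2) : ∃ z s : ℂ, s ^ 2 = z ^ 2 - 1 ∧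
    ‖z + s - b‖ = ‖b‖ ∧ ‖z - s - b‖ = ‖b‖ := by
  have hb0 : b ≠ 0 := by rintro rfl; norm_num at hb
  obtain ⟨r, hr⟩ : ∃ r : ℝ, r ^ 2 = (4 * b.re ^ 2 - 1) * (b.im ^ 2 + 1 / 4) :=
    ⟨_, Real.sq_sqrt (mul_nonneg (by nlinarith) (by positivity))⟩
  have key : ∀ t : ℝ, t ^ 2 = (4 * b.re ^ 2 - 1) * (b.im ^ 2 + 1 / 4) →
      ‖(1 / 2 + (2 * b.re * b.im + t : ℝ) * Complex.I) / b - b‖ = ‖b‖ := by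
    intro t ht
    have hn : ‖b‖ ≠ 0 := by simpa using hb0
    have h1 : ‖(1 / 2 + (2 * b.re * b.im + t : ℝ) * Complex.I) - b ^ 2‖ = ‖b ^ 2‖ := by
      rw [← sq_eq_sq₀ (norm_nonneg _) (norm_nonneg _), ← Complex.normSq_eq_norm_sq,
        ← Complex.normSq_eq_norm_sq, Complex.normSq_apply, Complex.normSq_apply]
      simp [pow_two]
      linear_combination ht
    have h2 : (1 / 2 + (2 * b.re * b.im + t : ℝ) * Complex.I) / b - b
      = ((1 / 2 + (2 * b.re * b.im + t : ℝ) * Complex.I) - b ^ 2) / b := by field_simp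
    rw [h2, norm_div, h1, norm_pow]
    field_simp
  refine ⟨(1 / 2 + (2 * b.re * b.im : ℝ) * Complex.I) / b, r * Complex.I / b, ?_, ?_, ?_⟩
  · field_simp
    apply Complex.ext
    · simp [pow_two]; nlinarith
    · simp [pow_two]; ring
  · rw [← key r hr]; push_cast; congr 1; ring
  · rw [← key (-r) (by rw [← hr]; ring)]; push_cast; congr 1; ring

lemma aux_unique (b z s : ℂ) (hs : s ^ 2 = z ^ 2 - 1)
    (h1 : ‖z + s - b‖ = ‖b‖) (h2 : ‖z - s - b‖ = ‖b‖) :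
    b * z = ⟨1 / 2, (b ^ 2).im⟩ := by
  have hp : (z + s) * (z - s) = 1 := by linear_combination -hs
  have a1 := aux_half b _ _ hp h1
  have a2 := aux_half b _ _ (by rw [mul_comm]; exact hp) h2
  have e : (b * (z + s)) * (b * (z - s)) = b ^ 2 := by linear_combination b ^ 2 * hp
  have ei := congrArg Complex.im e
  rw [Complex.mul_im, a1, a2] at ei
  have e3 : b * z = (b * (z + s) + b * (z - s)) / 2 := by ring
  have r3 : (b * z).re = ((b * (z + s)).re + (b * (z - s)).re) / 2 := by
    rw [mul_add, mul_sub, Complex.add_re, Complex.sub_re]; ring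
  have i3 : (b * z).im = ((b * (z + s)).im + (b * (z - s)).im) / 2 := by
    rw [mul_add, mul_sub, Complex.add_im, Complex.sub_im]; ring
  apply Complex.ext
  · rw [r3, a1, a2]; norm_num
  · rw [i3, ← ei]; ring


/-- Let `b ∈ ℂ` with `Re b ≤ −1/2`. Define
`L_b = {z : ∃ s, s² = z² − 1 ∧ |b − z − s| = |b|}`. Then `L_b ∩ C_b` consists of exactly
one point; this point equals the unique point `i_b` of `𝒜 ∩ C_b`; moreover
`L_b ∩ 𝒜 = L_b ∩ C_b = {i_b}`. -/
theorem stmt_6 (b : ℂ) (hb : b.re ≤ -1/2)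
    (A : Set ℂ)
    (hA : A = {z : ℂ | ∃ ρ : ℝ, ρ ∈ Set.Icc (0 : ℝ) 1 ∧ ∃ s : ℂ,
      s ^ 2 = (ρ : ℂ) * (1 - b ^ 2 + b ^ 2 * (ρ : ℂ)) ∧ z = b * (1 - (ρ : ℂ)) + s})
    (c : ℂ) (hc : c = (b + 1 / b) / 2)
    (Cb : Set ℂ) (hCb : Cb = {z : ℂ | ‖z - c‖ = ‖b‖ / 2})
    (Lb : Set ℂ)
    (hLb : Lb = {z : ℂ | ∃ s : ℂ, s ^ 2 = z ^ 2 - 1 ∧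
      ‖b - z - s‖ = ‖b‖}) :
    ∃ ib : ℂ, A ∩ Cb = {ib} ∧ Lb ∩ Cb = {ib} ∧ Lb ∩ A = {ib} := by
  have hb0 : b ≠ 0 := by rintro rfl; norm_num at hb
  have hn : 0 < ‖b‖ := norm_pos_iff.2 hb0
  have hAz : ∀ z s : ℂ, s ^ 2 = z ^ 2 - 1 → (z ∈ A ↔ ∃ ρ : ℝ, ρ ∈ Set.Icc (0 : ℝ) 1 ∧
      ((z + s - b) + (z - s - b)) ^ 2 = 4 * ρ * ((z + s - b) * (z - s - b))) := by
    intro z s hs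
    rw [hA]
    constructor
    · rintro ⟨ρ, hρ, t, ht, hz⟩
      refine ⟨ρ, hρ, ?_⟩
      have : t = z - b * (1 - ρ) := by rw [hz]; ring
      subst this
      linear_combination 4 * ht + 4 * ρ * hs
    · rintro ⟨ρ, hρ, h⟩
      refine ⟨ρ, hρ, z - b * (1 - ρ), ?_, by ring⟩
      linear_combination h / 4 - ρ * hs
  have hCz : ∀ z s : ℂ, s ^ 2 = z ^ 2 - 1 → (z ∈ Cb ↔
      ‖z + s - b‖ * ‖z - s - b‖ = ‖b‖ * ‖b‖) := by
    intro z s hs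
    have e : (z + s - b) * (z - s - b) = -(2 * b) * (z - c) := by
      rw [hc]; field_simp; linear_combination -hs
    rw [hCb, ← norm_mul, e, norm_mul, norm_neg, norm_mul, Set.mem_ofPred_eq]
    simp only [Complex.norm_ofNat]
    constructor
    · intro h; rw [h]; ring
    · intro h
      apply mul_left_cancel₀ hn.ne'; linarith
  have hLz : ∀ z, z ∈ Lb ↔ ∃ s : ℂ, s ^ 2 = z ^ 2 - 1 ∧ ‖z + s - b‖ = ‖b‖ := by
    intro z
    rw [hLb, Set.mem_ofPred_eq]
    have : ∀ s, ‖b - z - s‖ = ‖z + s - b‖ := fun s => by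
      rw [← norm_neg]; congr 1; ring
    simp only [this]
  obtain ⟨z₀, s₀, hs₀, h1, h2⟩ := aux_exists b hb
  have hz₀ := aux_unique b z₀ s₀ hs₀ h1 h2
  have uniq : ∀ z s : ℂ, s ^ 2 = z ^ 2 - 1 → ‖z + s - b‖ = ‖b‖ → ‖z - s - b‖ = ‖b‖ →
      z = z₀ := fun z s hs a1 a2 =>
    mul_left_cancel₀ hb0 ((aux_unique b z s hs a1 a2).trans hz₀.symm)
  have mA : z₀ ∈ A := (hAz z₀ s₀ hs₀).2 (aux_rho _ _ _ hn h1 h2)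
  have mC : z₀ ∈ Cb := (hCz z₀ s₀ hs₀).2 (by rw [h1, h2])
  have mL : z₀ ∈ Lb := (hLz z₀).2 ⟨s₀, hs₀, h1⟩
  refine ⟨z₀, ?_, ?_, ?_⟩
  · refine Set.eq_singleton_iff_unique_mem.2 ⟨⟨mA, mC⟩, ?_⟩
    rintro z ⟨ha, hc'⟩
    obtain ⟨s, hs⟩ := IsAlgClosed.exists_pow_nat_eq (z ^ 2 - 1) two_pos
    obtain ⟨ρ, hρ, h⟩ := (hAz z s hs).1 ha
    have e := aux_norm _ _ ρ hρ.1 hρ.2 h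
    have p := (hCz z s hs).1 hc'
    rw [← e] at p
    have q : ‖z + s - b‖ = ‖b‖ := (mul_self_inj (norm_nonneg _) hn.le).1 p
    exact uniq z s hs q (e ▸ q)
  · refine Set.eq_singleton_iff_unique_mem.2 ⟨⟨mL, mC⟩, ?_⟩
    rintro z ⟨hl, hc'⟩
    obtain ⟨s, hs, q⟩ := (hLz z).1 hl
    have p := (hCz z s hs).1 hc'
    rw [q] at p
    exact uniq z s hs q (mul_left_cancel₀ hn.ne' p)
  · refine Set.eq_singleton_iff_unique_mem.2 ⟨⟨mL, mA⟩, ?_⟩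
    rintro z ⟨hl, ha⟩
    obtain ⟨s, hs, q⟩ := (hLz z).1 hl
    obtain ⟨ρ, hρ, h⟩ := (hAz z s hs).1 ha
    have e := aux_norm _ _ ρ hρ.1 hρ.2 h
    exact uniq z s hs q (e ▸ q)
end

section
/- Let b be a nonzero complex number and ρ ∈ [0,1]. The quadratic equation x² + 2√ρ·x + (1 − 1/b²) = 0 has a complex solution x of modulus one if and only if 4ρ|b|⁴ = (b² + conj(b)² − 1)². -/
/-- Let `b ≠ 0` and `ρ ∈ [0,1]`. The quadratic equation
`x² + 2√ρ·x + (1 − 1/b²) = 0` has a complex solution `x` of modulus one iff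
`4ρ|b|⁴ = (b² + conj(b)² − 1)²`. -/
theorem stmt_8 (b : ℂ) (hb : b ≠ 0) (ρ : ℝ) (hρ : ρ ∈ Set.Icc (0 : ℝ) 1) :
    (∃ x : ℂ, ‖x‖ = 1 ∧
      x ^ 2 + 2 * (Real.sqrt ρ : ℂ) * x + (1 - 1 / b ^ 2) = 0) ↔
    ((4 * ρ * ‖b‖ ^ 4 : ℝ) : ℂ) =
      (b ^ 2 + (starRingEnd ℂ) b ^ 2 - 1) ^ 2 := by
  have hs : ((Real.sqrt ρ : ℝ) : ℂ) ^ 2 = (ρ : ℂ) := by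
    exact_mod_cast Real.sq_sqrt hρ.1
  have hN : b * (starRingEnd ℂ) b = ((‖b‖ : ℝ) : ℂ) ^ 2 := Complex.mul_conj' b
  have hL : ((4 * ρ * ‖b‖ ^ 4 : ℝ) : ℂ)
      = (2 * (Real.sqrt ρ : ℂ) * (b * (starRingEnd ℂ) b)) ^ 2 := by
    rw [hN]; push_cast; rw [← hs]; ring
  have hq : ∀ x : ℂ, x ^ 2 + 2 * (Real.sqrt ρ : ℂ) * x + (1 - 1 / b ^ 2) = 0 ↔
      b ^ 2 * (x ^ 2 + 2 * (Real.sqrt ρ : ℂ) * x + 1) = 1 := by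
    intro x
    have hb2 : b ^ 2 ≠ 0 := pow_ne_zero 2 hb
    rw [← mul_right_inj' hb2 (b := x ^ 2 + 2 * (Real.sqrt ρ : ℂ) * x + (1 - 1 / b ^ 2)),
      ← sub_eq_zero (b := (1 : ℂ))]
    have : b ^ 2 * (x ^ 2 + 2 * (Real.sqrt ρ : ℂ) * x + (1 - 1 / b ^ 2))
      = b ^ 2 * (x ^ 2 + 2 * (Real.sqrt ρ : ℂ) * x + 1) - 1 := by
      field_simp
      ring
    rw [this, mul_zero]
  rw [hL]
  simp only [hq]
  have hB : ‖(starRingEnd ℂ) b / b‖ = 1 := by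
    rw [norm_div, RCLike.norm_conj, div_self (norm_ne_zero_iff.mpr hb)]
  constructor
  · rintro ⟨x, hx, h⟩
    have hxx : x * (starRingEnd ℂ) x = 1 := by rw [Complex.mul_conj', hx]; norm_num
    have hc := congrArg (starRingEnd ℂ) h
    simp only [map_mul, map_add, map_pow, map_one, Complex.conj_ofReal, map_ofNat] at hc
    generalize (starRingEnd ℂ) b = B at *
    generalize (starRingEnd ℂ) x = X at *
    generalize (Real.sqrt ρ : ℂ) = s at *
    have h2 : B ^ 2 * (x ^ 2 + 2 * s * x + 1) = x ^ 2 := by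
      linear_combination x ^ 2 * hc - B ^ 2 * (x * X + 1 + 2 * s * x) * hxx
    have h3 : B ^ 2 = (x * b) ^ 2 := by
      linear_combination b ^ 2 * h2 - B ^ 2 * h
    rcases sq_eq_sq_iff_eq_or_eq_neg.mp h3 with h4 | h4
    · subst h4
      rw [← sub_eq_zero, ← neg_eq_zero]
      linear_combination (b ^ 2 + (x * b) ^ 2 - 1 - 2 * s * (b * (x * b))) * h
    · subst h4
      rw [← sub_eq_zero, ← neg_eq_zero]
      linear_combination (b ^ 2 + (x * b) ^ 2 - 1 - 2 * s * (b * (x * b))) * h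
  · intro h
    rcases sq_eq_sq_iff_eq_or_eq_neg.mp h with h4 | h4
    · refine ⟨-((starRingEnd ℂ) b / b), by rw [norm_neg, hB], ?_⟩
      field_simp
      linear_combination -h4
    · refine ⟨(starRingEnd ℂ) b / b, hB, ?_⟩
      field_simp
      linear_combination h4
end

section
/- Let R ∈ (1, 3/2] and b = 1 − R (so b ∈ [−1/2, 0)). For each n ≥ 1, the function f_n(z) = (z − b + s)^n + (z − b − s)^n − (−b)^n, where s is either complex square root of z² − 1 (the value is independent of the choice), has exactly n zeros in ℂ; they are pairwise distinct and all lie in the real interval [−1, 1]. -/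
open Polynomial in
theorem aux_poly (c : ℂ) (n : ℕ) : ∃ P : ℂ[X], P.natDegree ≤ n ∧
    ∀ z s : ℂ, s ^ 2 = z ^ 2 - 1 → P.eval z = (z + c + s) ^ n + (z + c - s) ^ n := by
  suffices h : (∃ P : ℂ[X], P.natDegree ≤ n ∧
      ∀ z s : ℂ, s ^ 2 = z ^ 2 - 1 → P.eval z = (z + c + s) ^ n + (z + c - s) ^ n) ∧
      (∃ P : ℂ[X], P.natDegree ≤ n + 1 ∧
      ∀ z s : ℂ, s ^ 2 = z ^ 2 - 1 → P.eval z = (z + c + s) ^ (n+1) + (z + c - s) ^ (n+1)) from h.1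
  induction n with
  | zero =>
    refine ⟨⟨C 2, by simp, fun z s _ => by simp; norm_num⟩,
      ⟨C 2 * X + C (2 * c), ?_, fun z s _ => by simp; ring⟩⟩
    compute_degree
  | succ n ih =>
    obtain ⟨⟨P, hP, hPe⟩, ⟨Q, hQ, hQe⟩⟩ := ih
    refine ⟨⟨Q, hQ, hQe⟩, ⟨(C 2 * X + C (2 * c)) * Q - (C (2 * c) * X + C (c ^ 2 + 1)) * P, ?_, ?_⟩⟩
    · have h1 : (C 2 * X + C (2 * c) : ℂ[X]).natDegree ≤ 1 := by compute_degree
      have h2 : (C (2 * c) * X + C (c ^ 2 + 1) : ℂ[X]).natDegree ≤ 1 := by compute_degree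
      refine (natDegree_sub_le _ _).trans (max_le ?_ ?_)
      · refine natDegree_mul_le.trans ?_
        omega
      · refine natDegree_mul_le.trans ?_
        omega
    · intro z s hs
      simp only [eval_sub, eval_mul, eval_add, eval_C, eval_X]
      rw [hPe z s hs, hQe z s hs]
      have e : 2 * c * z + (c ^ 2 + 1) = (z + c + s) * (z + c - s) := by
        linear_combination hs
      rw [e]
      ring

theorem aux_ivt (g : ℝ → ℝ) (hg : Continuous g) (a b : ℝ) (hab : a < b)
    (h : g a * g b < 0) : ∃ t, a < t ∧ t < b ∧ g t = 0 := by
  rcases mul_neg_iff.1 h with ⟨h1, h2⟩ | ⟨h1, h2⟩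
  · obtain ⟨t, ht, e⟩ := intermediate_value_Ioo' hab.le hg.continuousOn (show (0:ℝ) ∈ _ from ⟨h2, h1⟩)
    exact ⟨t, ht.1, ht.2, e⟩
  · obtain ⟨t, ht, e⟩ := intermediate_value_Ioo hab.le hg.continuousOn (show (0:ℝ) ∈ _ from ⟨h1, h2⟩)
    exact ⟨t, ht.1, ht.2, e⟩

theorem aux_r (c : ℝ) (hc : 0 < c) (hc2 : c ≤ 1 / 2) : ∃ r : ℝ → ℝ, Continuous r ∧
    (∀ t, c ≤ r t) ∧ ∀ t, (r t * Real.cos t - c) ^ 2 + (r t * Real.sin t) ^ 2 = 1 := by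
  refine ⟨fun t => c * Real.cos t + √(1 - c ^ 2 * Real.sin t ^ 2), by fun_prop, ?_, ?_⟩ <;> intro t
  · have h1 : 1 - c - c * Real.cos t ≤ √(1 - c ^ 2 * Real.sin t ^ 2) := by
      apply Real.le_sqrt_of_sq_le
      rw [Real.sin_sq]
      nlinarith [mul_nonneg (mul_nonneg hc.le (by linarith : 0 ≤ 1 - c))
        (by linarith [Real.neg_one_le_cos t] : 0 ≤ 1 + Real.cos t)]
    show c ≤ c * Real.cos t + √(1 - c ^ 2 * Real.sin t ^ 2)
    linarith
  · have h0 : 0 ≤ 1 - c ^ 2 * Real.sin t ^ 2 := by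
      nlinarith [Real.sin_sq_le_one t, sq_nonneg (Real.sin t), mul_nonneg hc.le hc.le]
    have h2 := Real.sq_sqrt h0
    have h3 := Real.sin_sq_add_cos_sq t
    dsimp only
    set q := √(1 - c ^ 2 * Real.sin t ^ 2)
    linear_combination h2 + (c ^ 2 * Real.cos t ^ 2 + 2 * c * q * Real.cos t + q^2 - c^2) * h3


/-- Let `R ∈ (1, 3/2]` and `b = 1 − R`. For each `n ≥ 1`, the function
`f_n(z) = (z − b + s)ⁿ + (z − b − s)ⁿ − (−b)ⁿ` (with `s` either square root of `z² − 1`;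
the value is independent of the choice) has exactly `n` zeros in `ℂ`; they are pairwise
distinct and all lie in the real interval `[−1, 1]`. -/
theorem stmt_9 (R : ℝ) (hR : 1 < R) (hR' : R ≤ 3/2) (b : ℝ) (hb : b = 1 - R)
    (n : ℕ) (hn : 1 ≤ n) :
    ∃ Z : Finset ℂ, Z.card = n ∧
      (∀ z : ℂ, z ∈ Z ↔ ∀ s : ℂ, s ^ 2 = z ^ 2 - 1 →
        (z - (b : ℂ) + s) ^ n + (z - (b : ℂ) - s) ^ n - (-(b : ℂ)) ^ n = 0) ∧
      (∀ z ∈ Z, ∃ x : ℝ, x ∈ Set.Icc (-1 : ℝ) 1 ∧ z = (x : ℂ)) := by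
  obtain ⟨c, hcb⟩ : ∃ c, c = -b := ⟨_, rfl⟩
  have hc : 0 < c := by linarith
  have hc2 : c ≤ 1 / 2 := by linarith
  obtain rfl : b = -c := by linarith
  clear hcb hb hR hR'
  obtain ⟨r, hr, hrc, hr1⟩ := aux_r c hc hc2
  obtain ⟨P, hPd, hPe⟩ := aux_poly c n
  have hn0 : (0:ℝ) < n := by exact_mod_cast hn
  have hcn : 0 < c ^ n := pow_pos hc n
  -- the real function
  let g : ℝ → ℝ := fun t => 2 * r t ^ n * Real.cos (n * t) - c ^ n
  have hg : Continuous g := by fun_prop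
  have hgP : ∀ t, (P - Polynomial.C ((c:ℂ) ^ n)).eval (((r t * Real.cos t - c : ℝ)) : ℂ) = (g t : ℂ) := by
    intro t
    have h1 : ((r t : ℂ) * Complex.cos t - c) ^ 2 + (r t * Complex.sin t) ^ 2 = 1 := by
      exact_mod_cast hr1 t
    rw [Polynomial.eval_sub, Polynomial.eval_C, hPe _ (r t * Complex.sin t * Complex.I)]
    · have e1 : ((r t * Real.cos t - c : ℝ) : ℂ) + c + r t * Complex.sin t * Complex.I
          = r t * (Complex.cos t + Complex.sin t * Complex.I) := by push_cast; ring
      have e2 : ((r t * Real.cos t - c : ℝ) : ℂ) + c - r t * Complex.sin t * Complex.I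
          = r t * (Complex.cos (-t) + Complex.sin (-t) * Complex.I) := by
        push_cast [Complex.cos_neg, Complex.sin_neg]; ring
      rw [e1, e2, mul_pow, mul_pow, Complex.cos_add_sin_mul_I_pow, Complex.cos_add_sin_mul_I_pow,
        mul_neg, Complex.cos_neg, Complex.sin_neg]
      simp only [g]
      push_cast
      ring
    · push_cast
      linear_combination -h1 + (r t * Complex.sin t) ^ 2 * Complex.I_sq
  have hlt : ∀ t, c ^ n < 2 * r t ^ n := fun t => by
    have := pow_le_pow_left₀ hc.le (hrc t) n
    linarith
  have hgk : ∀ k : ℕ, 0 < (-1) ^ k * g (k * Real.pi / n) := by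
    intro k
    have e : (n:ℝ) * (k * Real.pi / n) = k * Real.pi := by field_simp
    simp only [g]
    rw [e, Real.cos_nat_mul_pi]
    have := hlt (k * Real.pi / n)
    rcases neg_one_pow_eq_or ℝ k with h | h <;> rw [h] <;> linarith
  have hz : ∀ k : ℕ, ∃ t, k * Real.pi / n < t ∧ t < (k + 1 : ℕ) * Real.pi / n ∧ g t = 0 := by
    intro k
    refine aux_ivt g hg _ _ ?_ ?_
    · gcongr
      simp
    · have h1 := hgk k
      have h2 := hgk (k + 1)
      rw [pow_succ] at h2
      rcases neg_one_pow_eq_or ℝ k with h | h <;> rw [h] at h1 h2 <;> nlinarith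
  choose t ht1 ht2 ht0 using hz
  have htm : StrictMono t := strictMono_nat_of_lt_succ fun k => (ht2 k).trans (ht1 (k+1))
  have hmem : ∀ k, k < n → t k ∈ Set.Icc 0 Real.pi := by
    intro k hk
    refine ⟨le_trans (by positivity) (ht1 k).le, (ht2 k).le.trans ?_⟩
    rw [div_le_iff₀ hn0, mul_comm]
    have : ((k + 1 : ℕ) : ℝ) ≤ n := by exact_mod_cast hk
    exact mul_le_mul_of_nonneg_left this Real.pi_pos.le
  let x : ℝ → ℝ := fun t => r t * Real.cos t - c
  have hxinj : Set.InjOn x (Set.Icc 0 Real.pi) := by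
    intro u hu v hv huv
    simp only [x] at huv
    have h1 := hr1 u
    have h2 := hr1 v
    rw [huv] at h1
    have hru : 0 < r u := hc.trans_le (hrc u)
    have hrv : 0 < r v := hc.trans_le (hrc v)
    have h3 : r u * Real.sin u = r v * Real.sin v := by
      refine (sq_eq_sq₀ (mul_nonneg hru.le (Real.sin_nonneg_of_mem_Icc hu))
        (mul_nonneg hrv.le (Real.sin_nonneg_of_mem_Icc hv))).1 (by linarith)
    have h4 : r u * Real.cos u = r v * Real.cos v := by linarith
    have h5 : r u = r v := by
      refine (sq_eq_sq₀ hru.le hrv.le).1 ?_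
      have hu1 := Real.sin_sq_add_cos_sq u
      have hv1 := Real.sin_sq_add_cos_sq v
      linear_combination (-(r u)^2) * hu1 + (r v)^2 * hv1 + (r u * Real.sin u + r v * Real.sin v) * h3
        + (r u * Real.cos u + r v * Real.cos v) * h4
    rw [h5] at h4
    exact Real.injOn_cos hu hv (mul_left_cancel₀ hrv.ne' h4)
  let Z : Finset ℂ := (Finset.range n).image fun k => ((x (t k) : ℝ) : ℂ)
  have hZc : Z.card = n := by
    rw [Finset.card_image_of_injOn, Finset.card_range]
    intro i hi j hj hij
    simp only [Finset.coe_range, Set.mem_Iio] at hi hj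
    exact htm.injective (hxinj (hmem i hi) (hmem j hj) (Complex.ofReal_injective hij))
  set Q := P - Polynomial.C ((c:ℂ) ^ n) with hQ
  have hQ0 : Q ≠ 0 := by
    intro h
    have h1 := hgP ((0:ℕ) * Real.pi / n)
    rw [h, Polynomial.eval_zero] at h1
    have h2 := hgk 0
    have h3 : g ((0:ℕ) * Real.pi / n) = 0 := by exact_mod_cast h1.symm
    rw [h3] at h2
    simp at h2
  have hQd : Q.natDegree ≤ n := by
    rw [hQ]; exact (Polynomial.natDegree_sub_C).trans_le hPd
  have hZQ : Z = Q.roots.toFinset := by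
    refine Finset.eq_of_subset_of_card_le ?_ ?_
    · intro z hz
      obtain ⟨k, hk, rfl⟩ := Finset.mem_image.1 hz
      rw [Multiset.mem_toFinset, Polynomial.mem_roots hQ0, Polynomial.IsRoot.def]
      have := hgP (t k)
      rw [ht0, Complex.ofReal_zero] at this
      exact this
    · rw [hZc]
      exact (Multiset.toFinset_card_le _).trans ((Polynomial.card_roots' _).trans hQd)
  refine ⟨Z, hZc, ?_, ?_⟩
  · intro z
    rw [hZQ, Multiset.mem_toFinset, Polynomial.mem_roots hQ0, Polynomial.IsRoot.def, hQ,
      Polynomial.eval_sub, Polynomial.eval_C]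
    have key : ∀ s : ℂ, s ^ 2 = z ^ 2 - 1 →
        (z - ((-c : ℝ) : ℂ) + s) ^ n + (z - ((-c : ℝ) : ℂ) - s) ^ n - (-((-c : ℝ) : ℂ)) ^ n
        = P.eval z - (c:ℂ) ^ n := by
      intro s hs
      rw [hPe z s hs]
      push_cast
      simp only [sub_neg_eq_add, neg_neg]
    constructor
    · intro h s hs
      rw [key s hs, h]
    · intro h
      obtain ⟨s, hs⟩ := IsAlgClosed.exists_pow_nat_eq (z ^ 2 - 1) (n := 2) (by norm_num)
      rw [← key s hs]
      exact h s hs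
  · intro z hz
    obtain ⟨k, hk, rfl⟩ := Finset.mem_image.1 hz
    refine ⟨x (t k), ?_, rfl⟩
    have h1 := hr1 (t k)
    refine abs_le.1 ((sq_le_one_iff_abs_le_one _).1 ?_)
    have := sq_nonneg (r (t k) * Real.sin (t k))
    simp only [x]
    linarith
end

section
/- Let R ∈ (1, 3/2] and b = 1 − R. For n ≥ 1 let Z_n ⊂ [−1,1] be the set of the n distinct zeros of f_n. Then for every continuous function f : ℂ → ℝ, (1/n) Σ_{z ∈ Z_n} f(z) converges, as n → ∞, to (1/π) ∫_{−1}^{1} f(x)·(1 − bx)/(√(1 − x²)·(1 + b² − 2bx)) dx. In other words, the normalized zero counting measures μ_n of the Faber polynomials of the corresponding real Joukowski airfoil converge weak-* to the measure (U^{−1})_*(μ_{[−1,1]}) with density (1/π)(1/√(1−x²))·(1−bx)/(1+b²−2bx) on (−1,1). -/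
open Filter

lemma aux_riemann (F : ℝ → ℝ) (hF : Continuous F) (p : ℕ → ℕ → ℝ)
    (hp : ∀ n : ℕ, 1 ≤ n → ∀ k : ℕ, k < n →
      p n k ∈ Set.Ioo (k * (Real.pi / n)) ((k + 1) * (Real.pi / n))) :
    Tendsto (fun n : ℕ => (1 / (n : ℝ)) * ∑ k ∈ Finset.range n, F (p n k)) atTop
      (nhds ((1 / Real.pi) * ∫ x in (0 : ℝ)..Real.pi, F x)) := by
  have hpi := Real.pi_pos
  have huc : UniformContinuousOn F (Set.Icc 0 Real.pi) :=
    isCompact_Icc.uniformContinuousOn_of_continuous hF.continuousOn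
  rw [Metric.uniformContinuousOn_iff] at huc
  rw [Metric.tendsto_atTop]
  intro ε hε
  obtain ⟨δ, hδ, H⟩ := huc (ε / 2) (by positivity)
  obtain ⟨N, hN⟩ := exists_nat_gt (Real.pi / δ)
  refine ⟨max N 1, fun n hn => ?_⟩
  have hn1 : 1 ≤ n := le_trans (le_max_right _ _) hn
  have hnN : (N : ℝ) ≤ n := by exact_mod_cast le_trans (le_max_left _ _) hn
  have hn0 : (0 : ℝ) < n := by exact_mod_cast hn1
  have hmesh : Real.pi / n < δ := by
    rw [div_lt_iff₀ hn0]
    rw [div_lt_iff₀ hδ] at hN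
    nlinarith
  set h := Real.pi / n with hh
  have hh0 : 0 < h := by positivity
  have hnh : n * h = Real.pi := by rw [hh]; field_simp
  have hsplit : ∑ k ∈ Finset.range n, ∫ x in ((k : ℝ) * h)..(((k + 1 : ℕ) : ℝ) * h), F x
      = ∫ x in (0 : ℝ)..Real.pi, F x := by
    rw [intervalIntegral.sum_integral_adjacent_intervals
      (a := fun k : ℕ => (k : ℝ) * h) (fun k _ => hF.intervalIntegrable _ _)]
    simp [hnh]
  have hone : ∀ k ∈ Finset.range n,
      |h * F (p n k) - ∫ x in ((k : ℝ) * h)..(((k + 1 : ℕ) : ℝ) * h), F x| ≤ ε / 2 * h := by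
    intro k hk
    have hk' : k < n := Finset.mem_range.mp hk
    have hkn : ((k : ℝ) + 1) ≤ n := by exact_mod_cast hk'
    have hk0 : (0 : ℝ) ≤ k := Nat.cast_nonneg k
    have hpk := hp n hn1 k hk'
    have e1 : h * F (p n k) = ∫ x in ((k : ℝ) * h)..(((k + 1 : ℕ) : ℝ) * h), F (p n k) := by
      rw [intervalIntegral.integral_const]; push_cast; simp only [smul_eq_mul]; ring
    rw [e1, ← intervalIntegral.integral_sub (by simp) (hF.intervalIntegrable _ _)]
    have := intervalIntegral.norm_integral_le_of_norm_le_const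
      (a := (k : ℝ) * h) (b := ((k + 1 : ℕ) : ℝ) * h) (C := ε / 2)
      (f := fun x => F (p n k) - F x) ?_
    · rw [Real.norm_eq_abs] at this
      refine this.trans (le_of_eq ?_)
      push_cast
      rw [show ((k : ℝ) + 1) * h - k * h = h by ring, abs_of_pos hh0]
    · intro x hx
      push_cast at hx
      rw [Set.uIoc_of_le (by nlinarith)] at hx
      have := H (p n k) ⟨by nlinarith [hpk.1], by nlinarith [hpk.2]⟩ x
        ⟨by nlinarith [hx.1], by nlinarith [hx.2]⟩ ?_
      · rw [Real.dist_eq] at this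
        exact this.le
      · rw [Real.dist_eq, abs_lt]
        constructor <;> nlinarith [hpk.1, hpk.2, hx.1, hx.2]
  have key : |h * ∑ k ∈ Finset.range n, F (p n k) - ∫ x in (0 : ℝ)..Real.pi, F x|
      ≤ ε / 2 * Real.pi := by
    rw [← hsplit, Finset.mul_sum, ← Finset.sum_sub_distrib]
    refine (Finset.abs_sum_le_sum_abs _ _).trans ((Finset.sum_le_sum hone).trans (le_of_eq ?_))
    rw [Finset.sum_const, Finset.card_range, nsmul_eq_mul, ← hnh]; ring
  rw [Real.dist_eq]
  have e2 : (1 / (n : ℝ)) * ∑ k ∈ Finset.range n, F (p n k)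
      - (1 / Real.pi) * ∫ x in (0 : ℝ)..Real.pi, F x
      = (1 / Real.pi) * (h * ∑ k ∈ Finset.range n, F (p n k)
        - ∫ x in (0 : ℝ)..Real.pi, F x) := by
    rw [hh]; field_simp
  rw [e2, abs_mul, abs_of_pos (by positivity)]
  calc 1 / Real.pi * _ ≤ 1 / Real.pi * (ε / 2 * Real.pi) := by gcongr
    _ = ε / 2 := by field_simp
    _ < ε := by linarith

noncomputable def auxT (c t : ℝ) : ℝ := t + Real.arcsin (c * Real.sin t)
noncomputable def auxQ (c t : ℝ) : ℝ := Real.sqrt (1 - (c * Real.sin t) ^ 2)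
noncomputable def auxP (c t : ℝ) : ℝ := c * Real.cos t + auxQ c t

lemma aux_bd {c : ℝ} (hc : 0 < c) (hc' : c ≤ 1 / 2) (t : ℝ) :
    -(1/2) ≤ c * Real.sin t ∧ c * Real.sin t ≤ 1/2 := by
  constructor <;> nlinarith [Real.sin_le_one t, Real.neg_one_le_sin t]

lemma auxQ_sq {c : ℝ} (hc : 0 < c) (hc' : c ≤ 1 / 2) (t : ℝ) :
    auxQ c t ^ 2 = 1 - (c * Real.sin t) ^ 2 := by
  have := aux_bd hc hc' t
  exact Real.sq_sqrt (by nlinarith)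

lemma auxQ_pos {c : ℝ} (hc : 0 < c) (hc' : c ≤ 1 / 2) (t : ℝ) : 0 < auxQ c t := by
  have := aux_bd hc hc' t
  exact Real.sqrt_pos.mpr (by nlinarith)

lemma auxP_ge {c : ℝ} (hc : 0 < c) (hc' : c ≤ 1 / 2) (t : ℝ) : c ≤ auxP c t := by
  have h : c * (1 - Real.cos t) ≤ auxQ c t := by
    apply Real.le_sqrt_of_sq_le
    have h1 := Real.neg_one_le_cos t
    have h2 := Real.sin_sq_add_cos_sq t
    have h3 : c ^ 2 ≤ 1 / 4 := by nlinarith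
    have h4 : (c * Real.sin t) ^ 2 = c ^ 2 * (1 - Real.cos t ^ 2) := by
      rw [mul_pow, ← h2]; ring
    rw [h4]
    nlinarith [mul_nonneg (sq_nonneg c) (by linarith : 0 ≤ 1 + Real.cos t)]
  unfold auxP; linarith

lemma auxT_cos {c : ℝ} (hc : 0 < c) (hc' : c ≤ 1 / 2) (t : ℝ) :
    Real.cos (auxT c t) = auxP c t * Real.cos t - c := by
  have hb := aux_bd hc hc' t
  unfold auxT
  rw [Real.cos_add, Real.sin_arcsin (by linarith) (by linarith), Real.cos_arcsin]
  unfold auxP auxQ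
  have h2 := Real.sin_sq_add_cos_sq t
  linear_combination (-c) * h2

lemma auxT_sin {c : ℝ} (hc : 0 < c) (hc' : c ≤ 1 / 2) (t : ℝ) :
    Real.sin (auxT c t) = auxP c t * Real.sin t := by
  have hb := aux_bd hc hc' t
  unfold auxT
  rw [Real.sin_add, Real.sin_arcsin (by linarith) (by linarith), Real.cos_arcsin]
  unfold auxP auxQ
  ring

lemma auxT_deriv {c : ℝ} (hc : 0 < c) (hc' : c ≤ 1 / 2) (t : ℝ) :
    HasDerivAt (auxT c) (auxP c t / auxQ c t) t := by
  have hb := aux_bd hc hc' t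
  have h1 : HasDerivAt (fun t => c * Real.sin t) (c * Real.cos t) t :=
    (Real.hasDerivAt_sin t).const_mul c
  have h2 := (Real.hasDerivAt_arcsin (x := c * Real.sin t) (by linarith) (by linarith)).comp t h1
  have h3 := (hasDerivAt_id t).add h2
  have hq := auxQ_pos hc hc' t
  have e : auxP c t / auxQ c t = 1 + 1 / auxQ c t * (c * Real.cos t) := by
    unfold auxP
    field_simp
    ring
  rw [e]
  exact h3

lemma auxT_mono {c : ℝ} (hc : 0 < c) (hc' : c ≤ 1 / 2) : StrictMono (auxT c) := by
  apply strictMono_of_deriv_pos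
  intro t
  rw [(auxT_deriv hc hc' t).deriv]
  exact div_pos (lt_of_lt_of_le hc (auxP_ge hc hc' t)) (auxQ_pos hc hc' t)

lemma auxT_zero (c : ℝ) : auxT c 0 = 0 := by simp [auxT]
lemma auxT_pi (c : ℝ) : auxT c Real.pi = Real.pi := by simp [auxT]

lemma auxT_mem {c : ℝ} (hc : 0 < c) (hc' : c ≤ 1 / 2) {t : ℝ} (ht : t ∈ Set.Ioo 0 Real.pi) :
    auxT c t ∈ Set.Ioo 0 Real.pi := by
  have h1 := auxT_mono hc hc' ht.1
  have h2 := auxT_mono hc hc' ht.2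
  rw [auxT_zero] at h1
  rw [auxT_pi] at h2
  exact ⟨h1, h2⟩

lemma auxX_inj {c : ℝ} (hc : 0 < c) (hc' : c ≤ 1 / 2) :
    Set.InjOn (fun t => Real.cos (auxT c t)) (Set.Ioo 0 Real.pi) := by
  intro s hs t ht h
  exact (auxT_mono hc hc').injective (Real.injOn_cos
    (Set.Ioo_subset_Icc_self (auxT_mem hc hc' hs)) (Set.Ioo_subset_Icc_self (auxT_mem hc hc' ht)) h)

lemma auxX_cont {c : ℝ} : Continuous (fun t => Real.cos (auxT c t)) := by
  unfold auxT
  exact Real.continuous_cos.comp (continuous_id.add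
    (Real.continuous_arcsin.comp (continuous_const.mul Real.continuous_sin)))

lemma auxX_image {c : ℝ} (hc : 0 < c) (hc' : c ≤ 1 / 2) :
    (fun t => Real.cos (auxT c t)) '' (Set.Ioo 0 Real.pi) = Set.Ioo (-1) 1 := by
  apply Set.Subset.antisymm
  · rintro _ ⟨t, ht, rfl⟩
    have h := auxT_mem hc hc' ht
    have hpi := Real.pi_pos
    constructor
    · have := Real.strictAntiOn_cos (Set.Ioo_subset_Icc_self h) (Set.right_mem_Icc.mpr hpi.le) h.2
      simpa using this
    · have := Real.strictAntiOn_cos (Set.left_mem_Icc.mpr hpi.le) (Set.Ioo_subset_Icc_self h) h.1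
      simpa using this
  · have := intermediate_value_Ioo' (f := fun t => Real.cos (auxT c t)) Real.pi_pos.le
      (auxX_cont (c := c)).continuousOn
    simpa [auxT_zero, auxT_pi] using this

lemma aux_cov {c : ℝ} (hc : 0 < c) (hc' : c ≤ 1 / 2) (f : ℝ → ℝ) :
    ∫ x in (-1 : ℝ)..1, f x * (1 + c * x) / (Real.sqrt (1 - x ^ 2) * (1 + c ^ 2 + 2 * c * x))
      = ∫ t in (0 : ℝ)..Real.pi, f (Real.cos (auxT c t)) := by
  rw [intervalIntegral.integral_of_le (by norm_num), intervalIntegral.integral_of_le Real.pi_pos.le,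
    MeasureTheory.integral_Ioc_eq_integral_Ioo, MeasureTheory.integral_Ioc_eq_integral_Ioo,
    ← auxX_image hc hc']
  rw [MeasureTheory.integral_image_eq_integral_abs_deriv_smul measurableSet_Ioo
    (fun t _ => ((auxT_deriv hc hc' t).cos).hasDerivWithinAt) (auxX_inj hc hc')]
  apply MeasureTheory.setIntegral_congr_fun measurableSet_Ioo
  intro t ht
  have hT := auxT_mem hc hc' ht
  have hs : 0 < Real.sin (auxT c t) := Real.sin_pos_of_mem_Ioo hT
  have hP : 0 < auxP c t := lt_of_lt_of_le hc (auxP_ge hc hc' t)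
  have hQ := auxQ_pos hc hc' t
  have hQ2 := auxQ_sq hc hc' t
  have h2 := Real.sin_sq_add_cos_sq t
  have hsq : Real.sqrt (1 - Real.cos (auxT c t) ^ 2) = Real.sin (auxT c t) := by
    rw [← Real.sin_sq, Real.sqrt_sq hs.le]
  have hPd : auxP c t = c * Real.cos t + auxQ c t := rfl
  have hx := auxT_cos hc hc' t
  have e1 : 1 + c ^ 2 + 2 * c * Real.cos (auxT c t) = auxP c t ^ 2 := by
    rw [hx, hPd]; linear_combination (c ^ 2) * h2 - hQ2
  have e2 : 1 + c * Real.cos (auxT c t) = auxP c t * auxQ c t := by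
    rw [hx, hPd]; linear_combination (c ^ 2) * h2 - hQ2
  have habs : |-Real.sin (auxT c t) * (auxP c t / auxQ c t)|
      = Real.sin (auxT c t) * (auxP c t / auxQ c t) := by
    rw [neg_mul, abs_neg, abs_of_pos (by positivity)]
  simp only [smul_eq_mul]
  rw [hsq, e1, e2, habs]
  field_simp

lemma aux_zero {c : ℝ} (hc : 0 < c) (hc' : c ≤ 1 / 2) (n : ℕ) (t : ℝ)
    (h : 2 * auxP c t ^ n * Real.cos (n * t) - c ^ n = 0) (s : ℂ)
    (hs : s ^ 2 = ((Real.cos (auxT c t) : ℝ) : ℂ) ^ 2 - 1) :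
    (((Real.cos (auxT c t) : ℝ) : ℂ) + c + s) ^ n + (((Real.cos (auxT c t) : ℝ) : ℂ) + c - s) ^ n
      - (c : ℂ) ^ n = 0 := by
  have hx := auxT_cos hc hc' t
  have hy := auxT_sin hc hc' t
  have key : (((Real.cos (auxT c t) : ℝ) : ℂ) + c + (Real.sin (auxT c t) : ℝ) * Complex.I) ^ n
      + (((Real.cos (auxT c t) : ℝ) : ℂ) + c - (Real.sin (auxT c t) : ℝ) * Complex.I) ^ n
      - (c : ℂ) ^ n = 0 := by
    rw [hx, hy]
    have a1 : (((auxP c t * Real.cos t - c : ℝ) : ℂ) + c + (auxP c t * Real.sin t : ℝ) * Complex.I)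
        = auxP c t * (Complex.cos t + Complex.sin t * Complex.I) := by
      push_cast; ring
    have a2 : (((auxP c t * Real.cos t - c : ℝ) : ℂ) + c - (auxP c t * Real.sin t : ℝ) * Complex.I)
        = auxP c t * (Complex.cos ((-t : ℝ) : ℂ) + Complex.sin ((-t : ℝ) : ℂ) * Complex.I) := by
      push_cast; rw [Complex.cos_neg, Complex.sin_neg]; ring
    rw [a1, a2, mul_pow, mul_pow, Complex.cos_add_sin_mul_I_pow, Complex.cos_add_sin_mul_I_pow]
    have h' := congrArg (fun r : ℝ => (r : ℂ)) h
    push_cast at h' ⊢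
    rw [mul_neg, Complex.cos_neg, Complex.sin_neg]
    linear_combination h'
  have hI : s ^ 2 = ((Real.sin (auxT c t) : ℝ) * Complex.I) ^ 2 := by
    rw [hs, mul_pow, Complex.I_sq]
    have := Complex.sin_sq_add_cos_sq (auxT c t : ℂ)
    push_cast
    linear_combination this
  rcases sq_eq_sq_iff_eq_or_eq_neg.mp hI with h1 | h1
  · rw [h1]; exact key
  · rw [h1, sub_neg_eq_add, ← sub_eq_add_neg]; linear_combination key

lemma aux_exists_s10 {c : ℝ} (hc : 0 < c) (hc' : c ≤ 1 / 2) (n : ℕ) (hn : 1 ≤ n) (k : ℕ) :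
    ∃ t ∈ Set.Ioo (k * (Real.pi / n)) ((k + 1) * (Real.pi / n)),
      2 * auxP c t ^ n * Real.cos (n * t) - c ^ n = 0 := by
  have hn0 : (0 : ℝ) < n := by exact_mod_cast hn
  have hpi := Real.pi_pos
  have hle : k * (Real.pi / n) ≤ (k + 1) * (Real.pi / n) := by
    have : 0 < Real.pi / n := by positivity
    nlinarith
  have hcont : Continuous (fun t => 2 * auxP c t ^ n * Real.cos (n * t) - c ^ n) := by
    unfold auxP auxQ; fun_prop
  have hcn : 0 < c ^ n := by positivity
  have hPn : ∀ t, c ^ n ≤ auxP c t ^ n := fun t => pow_le_pow_left₀ hc.le (auxP_ge hc hc' t) n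
  have c1 : Real.cos (n * (k * (Real.pi / n))) = (-1) ^ k := by
    rw [← Real.cos_nat_mul_pi]; congr 1; field_simp
  have c2 : Real.cos (n * ((k + 1) * (Real.pi / n))) = -(-1) ^ k := by
    rw [show (n : ℝ) * ((k + 1) * (Real.pi / n)) = ((k + 1 : ℕ) : ℝ) * Real.pi by
      push_cast; field_simp, Real.cos_nat_mul_pi, pow_succ]; ring
  have p1 := hPn (k * (Real.pi / n))
  have p2 := hPn ((k + 1) * (Real.pi / n))
  rcases neg_one_pow_eq_or ℝ k with hk | hk
  · obtain ⟨t, ht, h⟩ := intermediate_value_Ioo' hle hcont.continuousOn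
      (show (0 : ℝ) ∈ Set.Ioo _ _ by
        constructor
        · simp only [c2, hk]; linarith
        · simp only [c1, hk]; linarith)
    exact ⟨t, ht, h⟩
  · obtain ⟨t, ht, h⟩ := intermediate_value_Ioo hle hcont.continuousOn
      (show (0 : ℝ) ∈ Set.Ioo _ _ by
        constructor
        · simp only [c1, hk]; linarith
        · simp only [c2, hk]; linarith)
    exact ⟨t, ht, h⟩

/-- Let `R ∈ (1, 3/2]` and `b = 1 − R`. For `n ≥ 1` let `Z n ⊂ [−1,1]` be
the set of the `n` distinct zeros of `f_n`. Then for every continuous `f : ℂ → ℝ`,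
`(1/n) Σ_{z ∈ Z n} f(z)` converges as `n → ∞` to
`(1/π) ∫_{−1}^{1} f(x)·(1 − bx)/(√(1 − x²)·(1 + b² − 2bx)) dx`; i.e. the normalized zero
counting measures of the Faber polynomials converge weak-* to `(U⁻¹)_*(μ_{[−1,1]})`. -/
theorem stmt_10 (R : ℝ) (hR : 1 < R) (hR' : R ≤ 3/2) (b : ℝ) (hb : b = 1 - R)
    (Z : ℕ → Finset ℂ)
    (hZcard : ∀ n, 1 ≤ n → (Z n).card = n)
    (hZzero : ∀ n, 1 ≤ n → ∀ z : ℂ,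
      z ∈ Z n ↔ ∀ s : ℂ, s ^ 2 = z ^ 2 - 1 →
        (z - (b : ℂ) + s) ^ n + (z - (b : ℂ) - s) ^ n - (-(b : ℂ)) ^ n = 0)
    (hZreal : ∀ n, 1 ≤ n → ∀ z ∈ Z n, ∃ x : ℝ, x ∈ Set.Icc (-1 : ℝ) 1 ∧ z = (x : ℂ)) :
    ∀ f : ℂ → ℝ, Continuous f →
      Tendsto (fun n : ℕ => (1 / (n : ℝ)) * ∑ z ∈ Z n, f z) atTop
        (nhds ((1 / Real.pi) *
          ∫ x in (-1 : ℝ)..1,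
            f (x : ℂ) * (1 - b * x) / (Real.sqrt (1 - x ^ 2) * (1 + b ^ 2 - 2 * b * x)))) := by
  intro f hf
  obtain ⟨c, rfl⟩ : ∃ c, b = -c := ⟨-b, by ring⟩
  have hc : 0 < c := by linarith
  have hc' : c ≤ 1 / 2 := by linarith
  have hex : ∀ n k : ℕ, ∃ t : ℝ, 1 ≤ n →
      t ∈ Set.Ioo (k * (Real.pi / n)) ((k + 1) * (Real.pi / n)) ∧
      2 * auxP c t ^ n * Real.cos (n * t) - c ^ n = 0 := by
    intro n k
    by_cases hn : 1 ≤ n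
    · obtain ⟨t, h1, h2⟩ := aux_exists_s10 hc hc' n hn k
      exact ⟨t, fun _ => ⟨h1, h2⟩⟩
    · exact ⟨0, fun h => absurd h hn⟩
  choose p hp using hex
  have hFc : Continuous (fun t => f ((Real.cos (auxT c t) : ℝ) : ℂ)) :=
    hf.comp (Complex.continuous_ofReal.comp auxX_cont)
  have hlim := aux_riemann _ hFc p (fun n hn k _ => (hp n k hn).1)
  have hint := aux_cov hc hc' (fun x => f (x : ℂ))
  have hint' : ∫ x in (-1 : ℝ)..1,
      f (x : ℂ) * (1 - -c * x) / (Real.sqrt (1 - x ^ 2) * (1 + (-c) ^ 2 - 2 * -c * x))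
      = ∫ t in (0 : ℝ)..Real.pi, f ((Real.cos (auxT c t) : ℝ) : ℂ) := by
    rw [← hint]
    congr 1
    funext x
    congr 2 <;> ring
  rw [hint']
  refine hlim.congr' ?_
  filter_upwards [eventually_ge_atTop 1] with n hn
  congr 1
  have hn0 : (0 : ℝ) < n := by exact_mod_cast hn
  have hh0 : 0 < Real.pi / n := div_pos Real.pi_pos hn0
  have hmem : ∀ k < n, p n k ∈ Set.Ioo 0 Real.pi := by
    intro k hk
    have h := (hp n k hn).1
    have hkn : ((k : ℝ) + 1) ≤ n := by exact_mod_cast hk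
    have hnh : n * (Real.pi / n) = Real.pi := by field_simp
    have hk0 : (0 : ℝ) ≤ k := Nat.cast_nonneg k
    exact ⟨by nlinarith [h.1], by nlinarith [h.2]⟩
  have hinj : Set.InjOn (fun k => ((Real.cos (auxT c (p n k)) : ℝ) : ℂ)) (Finset.range n) := by
    intro j hj k hk h
    have hj' : j < n := by simpa using hj
    have hk' : k < n := by simpa using hk
    have e := auxX_inj hc hc' (hmem j hj') (hmem k hk') (Complex.ofReal_injective h)
    have h1 := (hp n j hn).1
    have h2 := (hp n k hn).1
    rw [e] at h1
    have l1 : (j : ℝ) < k + 1 := lt_of_mul_lt_mul_right (h1.1.trans h2.2) hh0.le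
    have l2 : (k : ℝ) < j + 1 := lt_of_mul_lt_mul_right (h2.1.trans h1.2) hh0.le
    have l1' : j < k + 1 := by exact_mod_cast l1
    have l2' : k < j + 1 := by exact_mod_cast l2
    omega
  have himg : (Finset.range n).image (fun k => ((Real.cos (auxT c (p n k)) : ℝ) : ℂ)) = Z n := by
    apply Finset.eq_of_subset_of_card_le
    · intro z hz
      obtain ⟨k, _, rfl⟩ := Finset.mem_image.mp hz
      rw [hZzero n hn]
      intro s hs
      have := aux_zero hc hc' n (p n k) (hp n k hn).2 s hs
      simpa only [Complex.ofReal_neg, sub_neg_eq_add, neg_neg] using this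
    · rw [hZcard n hn, Finset.card_image_of_injOn hinj, Finset.card_range]
  rw [← himg, Finset.sum_image hinj]
end

section
/- Let b ∈ ℂ and n ∈ ℕ. For all z, s, w ∈ ℂ with s² = z² − 1, w² = b² + 1 − 2bz and w ≠ 0, one has (z − b + s)^n + (z − b − s)^n = 2·w^n·T_n((z − b)/w), where T_n is the n-th Chebyshev polynomial of the first kind evaluated at complex arguments. Consequently, for such z, f_n(z) = (z − b + s)^n + (z − b − s)^n − (−b)^n = 0 if and only if 2·T_n((z − b)/w) = (−b/w)^n. -/
theorem aux_cheb (p s w u : ℂ) (hp : p = w * u) (h : p ^ 2 - s ^ 2 = w ^ 2) (n : ℕ) :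
    (p + s) ^ n + (p - s) ^ n = 2 * w ^ n * (Polynomial.Chebyshev.T ℂ n).eval u := by
  induction n using Nat.twoStepInduction with
  | zero => simp; norm_num
  | one => simp [hp]; ring
  | more k h0 h1 =>
    have e : (p + s) ^ (k + 2) + (p - s) ^ (k + 2) =
        2 * p * ((p + s) ^ (k + 1) + (p - s) ^ (k + 1))
          - (p ^ 2 - s ^ 2) * ((p + s) ^ k + (p - s) ^ k) := by ring
    rw [e, h0, h1, h, hp]
    push_cast
    rw [Polynomial.Chebyshev.T_add_two]
    simp only [Polynomial.eval_sub, Polynomial.eval_mul, Polynomial.eval_X,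
      Polynomial.eval_ofNat]
    ring

/-- Let `b ∈ ℂ` and `n ∈ ℕ`. For all `z, s, w ∈ ℂ` with `s² = z² − 1`,
`w² = b² + 1 − 2bz` and `w ≠ 0`, one has
`(z − b + s)ⁿ + (z − b − s)ⁿ = 2·wⁿ·T_n((z − b)/w)`, where `T_n` is the `n`-th Chebyshev
polynomial of the first kind. Consequently `f_n(z) = 0` iff `2·T_n((z − b)/w) = (−b/w)ⁿ`. -/
theorem stmt_11 (b : ℂ) (n : ℕ) :
    ∀ z s w : ℂ, s ^ 2 = z ^ 2 - 1 → w ^ 2 = b ^ 2 + 1 - 2 * b * z → w ≠ 0 →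
      ((z - b + s) ^ n + (z - b - s) ^ n =
        2 * w ^ n * (Polynomial.Chebyshev.T ℂ n).eval ((z - b) / w)) ∧
      ((z - b + s) ^ n + (z - b - s) ^ n - (-b) ^ n = 0 ↔
        2 * (Polynomial.Chebyshev.T ℂ n).eval ((z - b) / w) = (-b / w) ^ n) := by
  intro z s w hs hw h0
  have key := aux_cheb (z - b) s w ((z - b) / w) (by field_simp)
    (by rw [hs, hw]; ring) n
  refine ⟨key, ?_⟩
  have hn : w ^ n ≠ 0 := pow_ne_zero n h0
  rw [key, div_pow, eq_div_iff hn, sub_eq_zero]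
  constructor
  · intro h
    rw [← h]; ring
  · intro h
    rw [← h]; ring
end

section
/- Let b be a nonzero complex number and n ≥ 1. If z, s ∈ ℂ satisfy s² = z² − 1, b² + 1 − 2bz ≠ 0, and (z − b + s)^n + (z − b − s)^n = 0, then (z − b)²/(b² + 1 − 2bz) is a real number in [0, 1). In other words, every zero of the shifted Faber polynomial other than c = (b + 1/b)/2 lies on the set 𝒜 = {z : (z − b)²/(b² + 1 − 2bz) ∈ [0,1]}. -/
/-- Let `b ≠ 0` and `n ≥ 1`. If `z, s ∈ ℂ` satisfy `s² = z² − 1`,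
`b² + 1 − 2bz ≠ 0`, and `(z − b + s)ⁿ + (z − b − s)ⁿ = 0`, then
`(z − b)²/(b² + 1 − 2bz)` is a real number in `[0, 1)`: every zero of the shifted Faber
polynomial other than `c = (b + 1/b)/2` lies on the arc `𝒜`. -/
theorem stmt_12 (b : ℂ) (hb : b ≠ 0) (n : ℕ) (hn : 1 ≤ n) :
    ∀ z s : ℂ, s ^ 2 = z ^ 2 - 1 → b ^ 2 + 1 - 2 * b * z ≠ 0 →
      (z - b + s) ^ n + (z - b - s) ^ n = 0 →
      ∃ r : ℝ, 0 ≤ r ∧ r < 1 ∧ (z - b) ^ 2 / (b ^ 2 + 1 - 2 * b * z) = (r : ℂ) := by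
  intro z s hs hV h
  have hPQ : (z - b + s) * (z - b - s) = b ^ 2 + 1 - 2 * b * z := by linear_combination -hs
  have hP : z - b + s ≠ 0 := by
    intro h0; rw [h0, zero_mul] at hPQ; exact hV hPQ.symm
  have hQ : z - b - s ≠ 0 := by
    intro h0; rw [h0, mul_zero] at hPQ; exact hV hPQ.symm
  obtain ⟨w, hw⟩ : ∃ w, w = (z - b + s) / (z - b - s) := ⟨_, rfl⟩
  have hwn : w ^ n = -1 := by
    rw [hw, div_pow, div_eq_iff (pow_ne_zero _ hQ)]
    linear_combination h
  have hnorm : ‖w‖ = 1 := by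
    have h1 : ‖w‖ ^ n = 1 := by rw [← norm_pow, hwn]; simp
    exact (pow_eq_one_iff_of_nonneg (norm_nonneg _) (by omega)).1 h1
  have hsq : w.re * w.re + w.im * w.im = 1 := by
    rw [← Complex.normSq_apply, Complex.normSq_eq_norm_sq, hnorm]; norm_num
  have hne : w ≠ 1 := by
    intro h1
    rw [h1, one_pow] at hwn
    norm_num at hwn
  have hinv : w + w⁻¹ = ((2 * w.re : ℝ) : ℂ) := by
    rw [Complex.inv_eq_conj hnorm, Complex.add_conj]
  refine ⟨(1 + w.re) / 2, by nlinarith [mul_self_nonneg w.im], ?_, ?_⟩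
  · have hle : w.re ≤ 1 := by nlinarith [mul_self_nonneg w.im]
    have hlt : w.re < 1 := by
      refine lt_of_le_of_ne hle fun h1 => hne ?_
      have him : w.im = 0 := by
        rw [h1] at hsq
        exact mul_self_eq_zero.1 (by linarith)
      exact Complex.ext (by simpa using h1) (by simpa using him)
    linarith
  · have e : (z - b) ^ 2 / (b ^ 2 + 1 - 2 * b * z) = (2 + (w + w⁻¹)) / 4 := by
      rw [← hPQ, hw]
      field_simp
      ring
    rw [e, hinv]
    push_cast
    ring
end

section
/- Let b be real with b < −1/2 (i.e., R = 1 − b > 3/2). Define c = (b + 1/b)/2, the loop L_b^+ = {z ∈ ℂ : ∃s ∈ ℂ, s² = z² − 1, |b − z − s| = |b| and |z − c| ≤ |b|/2}, and the segment I_b = [1/(2b), 1] ⊂ ℝ. Then the zeros of f_n accumulate on L_b^+ ∪ I_b: for every ε > 0 there exists N such that for all n ≥ N, every zero of f_n lies within distance ε of L_b^+ ∪ I_b. -/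
theorem aux_lim (n : ℕ → ℕ) (hn : Filter.Tendsto n Filter.atTop Filter.atTop)
    (x y w : ℕ → ℂ) (X Y W : ℂ) (hx : Filter.Tendsto x Filter.atTop (nhds X))
    (hy : Filter.Tendsto y Filter.atTop (nhds Y)) (hw : Filter.Tendsto w Filter.atTop (nhds W))
    (h : ∀ k, ‖x k‖ ^ n k ≤ ‖y k‖ ^ n k + ‖w k‖ ^ n k) : ‖X‖ ≤ max ‖Y‖ ‖W‖ := by
  have h2 : Filter.Tendsto (fun k => (2 : ℝ) ^ (1 / (n k : ℝ)) * max ‖y k‖ ‖w k‖) Filter.atTop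
      (nhds ((2 : ℝ) ^ (0 : ℝ) * max ‖Y‖ ‖W‖)) := by
    refine Filter.Tendsto.mul ?_ (hy.norm.max hw.norm)
    refine Filter.Tendsto.rpow tendsto_const_nhds ?_ (Or.inl (by norm_num))
    exact tendsto_one_div_atTop_nhds_zero_nat.comp hn
  rw [Real.rpow_zero, one_mul] at h2
  refine le_of_tendsto_of_tendsto hx.norm h2 ?_
  filter_upwards [hn.eventually_ge_atTop 1] with k hk
  have hk0 : n k ≠ 0 := by omega
  refine le_of_pow_le_pow_left₀ hk0 (by positivity) ?_
  rw [mul_pow, ← Real.rpow_natCast ((2 : ℝ) ^ (1 / (n k : ℝ))), ← Real.rpow_mul (by norm_num),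
    one_div, inv_mul_cancel₀ (by exact_mod_cast hk0), Real.rpow_one]
  have h3 : ‖y k‖ ^ n k ≤ max ‖y k‖ ‖w k‖ ^ n k := by gcongr; exact le_max_left _ _
  have h4 : ‖w k‖ ^ n k ≤ max ‖y k‖ ‖w k‖ ^ n k := by gcongr; exact le_max_right _ _
  linarith [h k]

theorem aux_seg (b : ℝ) (hb : b < -1/2) (p q : ℂ) (hpq : p * q = 1)
    (h1 : ‖p - b‖ = ‖q - b‖) (h2 : ‖(b : ℂ)‖ ≤ ‖p - b‖) :
    ∃ x : ℝ, x ∈ Set.Icc (1 / (2 * b)) 1 ∧ (p + q) / 2 = (x : ℂ) := by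
  have e1 : ‖p - b‖ ^ 2 = ‖q - b‖ ^ 2 := by rw [h1]
  have e2 : ‖(b : ℂ)‖ ^ 2 ≤ ‖p - b‖ ^ 2 := by gcongr
  simp only [Complex.sq_norm, Complex.normSq_apply, Complex.sub_re, Complex.sub_im,
    Complex.ofReal_re, Complex.ofReal_im, sub_zero, mul_zero, add_zero] at e1 e2
  have r1 := congrArg Complex.re hpq
  have r2 := congrArg Complex.im hpq
  simp only [Complex.mul_re, Complex.mul_im, Complex.one_re, Complex.one_im] at r1 r2
  obtain ⟨x, y⟩ := p
  obtain ⟨u, v⟩ := q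
  simp only at *
  have hu : (x * x + y * y) * u = x := by linear_combination x * r1 + y * r2
  have hv : (x * x + y * y) * v = -y := by linear_combination x * r2 - y * r1
  have hM : (x * x + y * y) * (u * u + v * v) = 1 := by
    linear_combination u * hu + v * hv + r1
  have key : (x * x + y * y - 1) * (x * x + y * y + 1 - 2 * b * x) = 0 := by
    linear_combination (x * x + y * y) * e1 + hM - 2 * b * hu
  rcases mul_eq_zero.mp key with k | k
  · have k' : x * x + y * y = 1 := by linarith
    rw [k', one_mul] at hu hv
    subst hu hv
    refine ⟨u, ⟨?_, by nlinarith⟩, ?_⟩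
    · rw [div_le_iff_of_neg (by linarith)]
      nlinarith
    · apply Complex.ext <;> simp <;> ring
  · nlinarith

theorem aux_bd_s13 (b : ℝ) (n : ℕ) (hn : 1 ≤ n) (A B : ℂ) (hB : ‖B‖ ≤ 1 + ‖(b : ℂ)‖)
    (h : ‖A‖ ^ n ≤ ‖B‖ ^ n + ‖(b : ℂ)‖ ^ n) : ‖A‖ ≤ 2 * (1 + ‖(b : ℂ)‖) := by
  refine le_of_pow_le_pow_left₀ (by omega : n ≠ 0) (by positivity) ?_
  have h3 : ‖B‖ ^ n ≤ (1 + ‖(b : ℂ)‖) ^ n := by gcongr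
  have h4 : ‖(b : ℂ)‖ ^ n ≤ (1 + ‖(b : ℂ)‖) ^ n := by gcongr; linarith
  have h5 : (2 : ℝ) ≤ 2 ^ n := le_self_pow₀ (by norm_num) (by omega)
  rw [mul_pow]
  have : 0 ≤ (1 + ‖(b : ℂ)‖) ^ n := by positivity
  nlinarith

/-- Let `b` be real with `b < −1/2`. With `c = (b + 1/b)/2`, the loop
`L_b⁺ = {z : ∃ s, s² = z² − 1 ∧ |b − z − s| = |b| ∧ |z − c| ≤ |b|/2}` and the segment
`I_b = [1/(2b), 1] ⊂ ℝ`, the zeros of `f_n` accumulate on `L_b⁺ ∪ I_b`: for every `ε > 0`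
there exists `N` such that for all `n ≥ N`, every zero of `f_n` lies within distance `ε`
of `L_b⁺ ∪ I_b`. -/
theorem stmt_13 (b : ℝ) (hb : b < -1/2)
    (c : ℂ) (hc : c = ((b : ℂ) + 1 / (b : ℂ)) / 2)
    (Lb : Set ℂ)
    (hLb : Lb = {z : ℂ | ∃ s : ℂ, s ^ 2 = z ^ 2 - 1 ∧
      ‖(b : ℂ) - z - s‖ = ‖(b : ℂ)‖ ∧
      ‖z - c‖ ≤ ‖(b : ℂ)‖ / 2})
    (Ib : Set ℂ)
    (hIb : Ib = {z : ℂ | ∃ x : ℝ, x ∈ Set.Icc (1 / (2 * b)) 1 ∧ z = (x : ℂ)}) :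
    ∀ ε > (0 : ℝ), ∃ N : ℕ, ∀ n : ℕ, N ≤ n →
      ∀ z : ℂ, (∀ s : ℂ, s ^ 2 = z ^ 2 - 1 →
          (z - (b : ℂ) + s) ^ n + (z - (b : ℂ) - s) ^ n - (-(b : ℂ)) ^ n = 0) →
        ∃ w ∈ Lb ∪ Ib, dist z w ≤ ε := by
  intro ε hε
  by_contra hcon
  push Not at hcon
  choose n hn z hz hd using hcon
  have hs : ∀ k, ∃ s : ℂ, s ^ 2 = z k ^ 2 - 1 ∧ ‖z k - b - s‖ ≤ ‖z k - b + s‖ := by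
    intro k
    obtain ⟨s, hs⟩ := IsAlgClosed.exists_pow_nat_eq (z k ^ 2 - 1) (by norm_num : 0 < 2)
    rcases le_total ‖z k - b - s‖ ‖z k - b + s‖ with h | h
    · exact ⟨s, hs, h⟩
    · exact ⟨-s, by rw [neg_sq, hs], by simpa [sub_eq_add_neg] using h⟩
  choose s hs hAB using hs
  have hz' : ∀ k, (z k - b + s k) ^ n k + (z k - b - s k) ^ n k - (-(b : ℂ)) ^ n k = 0 :=
    fun k => hz k _ (hs k)
  have t1 : ∀ k, ‖z k - b + s k‖ ^ n k ≤ ‖z k - b - s k‖ ^ n k + ‖(b : ℂ)‖ ^ n k := by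
    intro k
    have e : (z k - b + s k) ^ n k = (-(b : ℂ)) ^ n k - (z k - b - s k) ^ n k := by
      linear_combination hz' k
    have := norm_sub_le ((-(b : ℂ)) ^ n k) ((z k - b - s k) ^ n k)
    rw [← e, norm_pow, norm_pow, norm_pow, norm_neg] at this
    linarith
  have t2 : ∀ k, ‖(b : ℂ)‖ ^ n k ≤ ‖z k - b + s k‖ ^ n k + ‖z k - b - s k‖ ^ n k := by
    intro k
    have e : (-(b : ℂ)) ^ n k = (z k - b + s k) ^ n k + (z k - b - s k) ^ n k := by
      linear_combination - hz' k
    have := norm_add_le ((z k - b + s k) ^ n k) ((z k - b - s k) ^ n k)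
    rw [← e, norm_pow, norm_pow, norm_pow, norm_neg] at this
    linarith
  have hbA : ∀ k, 1 ≤ k → ‖z k - b + s k‖ ≤ 2 * (1 + ‖(b : ℂ)‖) := by
    intro k hk
    have hpq : ‖z k + s k‖ * ‖z k - s k‖ = 1 := by
      rw [← norm_mul, show (z k + s k) * (z k - s k) = 1 by linear_combination - hs k, norm_one]
    rcases le_or_gt ‖z k - s k‖ 1 with h | h
    · refine aux_bd_s13 b (n k) (hk.trans (hn k)) _ _ ?_ (t1 k)
      have := norm_sub_le (z k - s k) b
      rw [show z k - b - s k = z k - s k - b by ring]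
      linarith
    · have h' : ‖z k + s k‖ ≤ 1 := by nlinarith [norm_nonneg (z k + s k)]
      have := norm_sub_le (z k + s k) b
      rw [show z k - b + s k = z k + s k - b by ring]
      linarith [norm_nonneg (b : ℂ)]
  set K := 2 * (1 + ‖(b : ℂ)‖) with hK
  have hmem : ∀ k, (z (k + 1) - b + s (k + 1), z (k + 1) - b - s (k + 1)) ∈
      Metric.closedBall (0 : ℂ) K ×ˢ Metric.closedBall (0 : ℂ) K := by
    intro k
    have := hbA (k + 1) (by omega)
    simp only [Set.mem_prod, mem_closedBall_zero_iff]
    exact ⟨this, (hAB _).trans this⟩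
  obtain ⟨⟨A, B⟩, -, φ, hφ, hlim⟩ :=
    ((isCompact_closedBall (0 : ℂ) K).prod (isCompact_closedBall (0 : ℂ) K)).tendsto_subseq hmem
  rw [nhds_prod_eq] at hlim
  have lA : Filter.Tendsto (fun k => z (φ k + 1) - b + s (φ k + 1)) Filter.atTop (nhds A) :=
    hlim.fst
  have lB : Filter.Tendsto (fun k => z (φ k + 1) - b - s (φ k + 1)) Filter.atTop (nhds B) :=
    hlim.snd
  have lb : Filter.Tendsto (fun _ : ℕ => (b : ℂ)) Filter.atTop (nhds (b : ℂ)) :=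
    tendsto_const_nhds
  have ln : Filter.Tendsto (fun k => n (φ k + 1)) Filter.atTop Filter.atTop := by
    refine Filter.tendsto_atTop_mono (fun k => ?_) Filter.tendsto_id
    have h1 := hn (φ k + 1)
    have h2 := hφ.id_le k
    simp only [id] at h2 ⊢
    omega
  have m1 := aux_lim _ ln _ _ _ _ _ _ lA lB lb (fun k => t1 _)
  have m2 := aux_lim _ ln _ _ _ _ _ _ lb lA lB (fun k => t2 _)
  have m3 : ‖B‖ ≤ ‖A‖ := le_of_tendsto_of_tendsto' lB.norm lA.norm (fun k => hAB _)
  rw [max_eq_left m3] at m2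
  have lz : Filter.Tendsto (fun k => z (φ k + 1)) Filter.atTop (nhds ((A + B) / 2 + b)) := by
    refine (((lA.add lB).div_const 2).add lb).congr (fun k => ?_)
    ring
  have lpq : (A + b) * (B + b) = 1 := by
    refine tendsto_nhds_unique ((lA.add lb).mul (lB.add lb)) ?_
    refine tendsto_const_nhds.congr (fun k => ?_)
    linear_combination hs (φ k + 1)
  have hb0 : (b : ℂ) ≠ 0 := by
    have : b ≠ 0 := by linarith
    exact_mod_cast this
  have hw : (A + B) / 2 + b ∈ Lb ∪ Ib := by
    rcases le_max_iff.mp m1 with h | h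
    · right
      rw [hIb]
      obtain ⟨x, hx, e⟩ := aux_seg b hb (A + b) (B + b) lpq
        (by simpa using le_antisymm h m3) (by simpa using m2)
      exact ⟨x, hx, by rw [← e]; ring⟩
    · left
      rw [hLb]
      have hA : ‖A‖ = ‖(b : ℂ)‖ := le_antisymm h m2
      refine ⟨(A - B) / 2, by linear_combination -lpq, ?_, ?_⟩
      · rw [show (b : ℂ) - ((A + B) / 2 + b) - (A - B) / 2 = -A by ring, norm_neg, hA]
      · have e : (A + B) / 2 + b - c = - (A * B) / (2 * b) := by
          rw [hc]
          field_simp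
          linear_combination lpq
        rw [e, norm_div, norm_neg, norm_mul, norm_mul, hA, Complex.norm_two,
          div_le_div_iff₀ (by positivity) (by norm_num)]
        have : ‖B‖ ≤ ‖(b : ℂ)‖ := m3.trans h
        nlinarith [norm_nonneg (b : ℂ), mul_le_mul_of_nonneg_left this (norm_nonneg (b : ℂ))]
  have l0 := lz.dist (tendsto_const_nhds (x := (A + B) / 2 + (b : ℂ)))
  have := le_of_tendsto_of_tendsto' tendsto_const_nhds l0 (fun k => (hd (φ k + 1) _ hw).le)
  rw [dist_self] at this
  linarith
end

section
/- Let b be real with b < −1/2, set β = 1 − 1/(2b²) ∈ (−1, 1) and α = arccos(β) ∈ (0, π). For n ≥ 1 let P_n be the unique polynomial of degree n satisfying P_n(z) = (z − b + s)^n + (z − b − s)^n − (−b)^n for all z (s² = z² − 1). Then for every bounded continuous f : ℂ → ℝ, the averages (1/n) Σ f(z) over the roots z of P_n counted with multiplicity converge, as n → ∞, to (1/π) ∫_{β}^{1} f( b(1 − t²) + t·√(1 − b²(1 − t²)) ) dt/√(1 − t²) + (1/(2π)) ∫_{α}^{2π − α} f( (ζ(θ) + 1/ζ(θ))/2 ) dθ,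 where √ denotes the nonnegative real square root (its argument 1 − b²(1 − t²) is positive for t ∈ [β, 1]) and ζ(θ) = b(1 − e^{iθ}). -/
open Filter

lemma root_near (p : Polynomial ℂ) (n : ℕ) (hn : 1 ≤ n) (hp : p.degree = n) (z : ℂ) :
    ∃ r ∈ p.roots, ‖z - r‖ * ‖p.derivative.eval z‖ ≤ n * ‖p.eval z‖ := by
  have hp0 : p ≠ 0 := by
    rintro rfl
    simp at hp
  by_cases hz : p.eval z = 0
  · exact ⟨z, by simpa [hp0] using hz, by simp [hz]⟩
  by_contra! H
  have hcard : p.roots.card = n := by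
    rw [← (IsAlgClosed.splits p).natDegree_eq_card_roots]
    exact Polynomial.natDegree_eq_of_degree_eq_some hp
  have h1 := (IsAlgClosed.splits p).eval_derivative_div_eval_of_ne_zero hz
  have hpz : 0 < ‖p.eval z‖ := norm_pos_iff.2 hz
  have hn0 : (0:ℝ) < n := by exact_mod_cast hn
  have hne : p.roots ≠ 0 := by
    intro h; rw [h] at hcard; simp at hcard; omega
  obtain ⟨r0, hr0⟩ := Multiset.exists_mem_of_ne_zero hne
  have hd : 0 < ‖p.derivative.eval z‖ := by
    have := H r0 hr0
    have h2 : 0 < ‖z - r0‖ * ‖p.derivative.eval z‖ := lt_of_le_of_lt (by positivity) this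
    exact pos_of_mul_pos_right h2 (norm_nonneg _)
  have h3 : ‖(p.roots.map fun w => 1 / (z - w)).sum‖ ≤ (p.roots.map fun w => ‖1 / (z - w)‖).sum := by
    have := norm_multiset_sum_le (p.roots.map fun w => 1 / (z - w))
    simpa [Multiset.map_map, Function.comp_def] using this
  have h4 : (p.roots.map fun w => ‖1 / (z - w)‖).sum <
      (p.roots.map fun _ => ‖p.derivative.eval z‖ / (n * ‖p.eval z‖)).sum := by
    apply Multiset.sum_lt_sum_of_nonempty hne
    intro w hw
    have h5 := H w hw
    have h6 : 0 < ‖z - w‖ := by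
      have h2 : 0 < ‖z - w‖ * ‖p.derivative.eval z‖ := lt_of_le_of_lt (by positivity) h5
      exact pos_of_mul_pos_left h2 (norm_nonneg _)
    rw [norm_div, norm_one, div_lt_div_iff₀ h6 (by positivity)]
    linarith
  rw [Multiset.map_const', Multiset.sum_replicate, hcard, nsmul_eq_mul] at h4
  rw [← h1, norm_div] at h3
  have h7 : (n:ℝ) * (‖p.derivative.eval z‖ / (n * ‖p.eval z‖)) = ‖p.derivative.eval z‖ / ‖p.eval z‖ := by
    field_simp
  linarith

lemma node_mem {a c lam : ℝ} (ha : 0 ≤ a) (hl : 0 < lam) {n : ℕ} (hn : 1 ≤ n) {k : ℕ}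
    (hk : k ∈ Finset.Ico ⌈a * n / lam⌉₊ ⌊c * n / lam⌋₊) :
    a ≤ lam * k / n ∧ lam * ((k + 1 : ℕ) : ℝ) / n ≤ c := by
  have hn0 : (0:ℝ) < n := by exact_mod_cast hn
  rw [Finset.mem_Ico] at hk
  have h1 := Nat.ceil_le.1 hk.1
  have h2 := (Nat.le_floor_iff' (by omega)).1 (Nat.succ_le_of_lt hk.2)
  rw [div_le_iff₀ hl] at h1
  rw [le_div_iff₀ hl] at h2
  rw [le_div_iff₀ hn0, div_le_iff₀ hn0]
  constructor
  · linarith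
  · simp only [Nat.succ_eq_add_one] at h2; linarith

lemma node_mem' {a c lam σ : ℝ} (ha : 0 ≤ a) (hl : 0 < lam) (hσ : 0 ≤ σ) (hσ1 : σ ≤ 1)
    {n : ℕ} (hn : 1 ≤ n) {k : ℕ}
    (hk : k ∈ Finset.Ico ⌈a * n / lam⌉₊ ⌊c * n / lam⌋₊) :
    lam * (k + σ) / n ∈ Set.Icc a c := by
  have hn0 : (0:ℝ) < n := by exact_mod_cast hn
  obtain ⟨h1, h2⟩ := node_mem ha hl hn hk
  constructor
  · refine h1.trans ?_
    gcongr; linarith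
  · refine le_trans ?_ h2
    push_cast
    gcongr

lemma riemann {a c lam σ : ℝ} (ha : 0 ≤ a) (hac : a < c) (hl : 0 < lam) (hσ : 0 ≤ σ) (hσ1 : σ ≤ 1)
    {h : ℝ → ℝ} (hh : ContinuousOn h (Set.Icc a c)) {η : ℝ} (hη : 0 < η) :
    ∀ᶠ n : ℕ in atTop, (∫ x in a..c, h x) - η ≤
      (lam / n) * ∑ k ∈ Finset.Ico ⌈a * n / lam⌉₊ ⌊c * n / lam⌋₊, h (lam * (k + σ) / n) := by
  obtain ⟨B, hB⟩ := isCompact_Icc.exists_bound_of_continuousOn hh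
  have hB0 : 0 ≤ B := (norm_nonneg _).trans (hB a ⟨le_rfl, hac.le⟩)
  have huc := isCompact_Icc.uniformContinuousOn_of_continuous hh
  rw [Metric.uniformContinuousOn_iff] at huc
  have hca : 0 < c - a := sub_pos.2 hac
  obtain ⟨δ, hδ, huc⟩ := huc (η / (2 * (c - a))) (by positivity)
  have hlim : Tendsto (fun n : ℕ => lam / (n:ℝ)) atTop (nhds 0) :=
    tendsto_const_div_atTop_nhds_zero_nat lam
  have e1 : ∀ᶠ n : ℕ in atTop, lam / (n:ℝ) < δ := hlim.eventually (gt_mem_nhds hδ)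
  have e2 : ∀ᶠ n : ℕ in atTop, lam / (n:ℝ) < η / (4 * (B + 1)) :=
    hlim.eventually (gt_mem_nhds (by positivity))
  have e3 : ∀ᶠ n : ℕ in atTop, lam / (n:ℝ) < (c - a) / 2 :=
    hlim.eventually (gt_mem_nhds (by positivity))
  filter_upwards [e1, e2, e3, eventually_ge_atTop 1] with n h1 h2 h3 hn
  have hn0 : (0:ℝ) < n := by exact_mod_cast hn
  set j0 := ⌈a * n / lam⌉₊ with hj0
  set j1 := ⌊c * n / lam⌋₊ with hj1
  set p : ℕ → ℝ := fun k => lam * k / n with hp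
  have q0 : a ≤ p j0 := by
    have := Nat.le_ceil (a * n / lam)
    rw [div_le_iff₀ hl] at this
    simp only [hp]
    rw [le_div_iff₀ hn0]; linarith
  have q0' : p j0 ≤ a + lam / n := by
    have := (Nat.ceil_lt_add_one (show 0 ≤ a * n / lam by positivity)).le
    rw [div_add_one hl.ne', le_div_iff₀ hl] at this
    simp only [hp]
    rw [div_le_iff₀ hn0, add_mul, div_mul_cancel₀ _ hn0.ne']; linarith
  have q1 : p j1 ≤ c := by
    have := Nat.floor_le (show 0 ≤ c * n / lam by have := ha.trans hac.le; positivity)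
    rw [le_div_iff₀ hl] at this
    simp only [hp]
    rw [div_le_iff₀ hn0]; linarith
  have q1' : c - lam / n ≤ p j1 := by
    have := (Nat.lt_floor_add_one (c * n / lam)).le
    rw [div_le_iff₀ hl] at this
    simp only [hp]
    rw [le_div_iff₀ hn0, sub_mul, div_mul_cancel₀ _ hn0.ne']; linarith
  have q2 : p j0 ≤ p j1 := by linarith
  have hj : j0 ≤ j1 := by
    simp only [hp] at q2
    rw [div_le_div_iff_of_pos_right hn0, mul_le_mul_iff_right₀ hl] at q2
    exact_mod_cast q2
  have hint : ∀ x y, a ≤ x → x ≤ y → y ≤ c → IntervalIntegrable h MeasureTheory.volume x y := by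
    intro x y hx hxy hy
    apply ContinuousOn.intervalIntegrable
    rw [Set.uIcc_of_le hxy]
    exact hh.mono (Set.Icc_subset_Icc hx hy)
  have hbd : ∀ x y, a ≤ x → x ≤ y → y ≤ c → |∫ t in x..y, h t| ≤ B * (y - x) := by
    intro x y hx hxy hy
    have := intervalIntegral.norm_integral_le_of_norm_le_const (a := x) (b := y) (f := h) (C := B) (by
      intro t ht
      rw [Set.uIoc_of_le hxy] at ht
      exact hB t ⟨hx.trans ht.1.le, ht.2.trans hy⟩)
    rwa [Real.norm_eq_abs, abs_of_nonneg (sub_nonneg.2 hxy)] at this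
  have s1 : (∫ x in a..c, h x) = (∫ x in a..p j0, h x) + (∫ x in p j0..p j1, h x) + ∫ x in p j1..c, h x := by
    rw [intervalIntegral.integral_add_adjacent_intervals (hint _ _ le_rfl q0 (by linarith))
      (hint _ _ q0 q2 q1), intervalIntegral.integral_add_adjacent_intervals
      (hint _ _ le_rfl (by linarith) (by linarith)) (hint _ _ (by linarith) q1 le_rfl)]
  have s2 : (∑ k ∈ Finset.Ico j0 j1, ∫ x in p k..p (k+1), h x) = ∫ x in p j0..p j1, h x := by
    apply intervalIntegral.sum_integral_adjacent_intervals_Ico hj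
    intro k hk
    obtain ⟨m1, m2⟩ := node_mem ha hl hn (Finset.mem_Ico.2 hk)
    apply hint _ _ m1 _ m2
    show lam * (k:ℝ) / n ≤ lam * ((k + 1 : ℕ) : ℝ) / n
    push_cast
    gcongr; linarith
  have s3 : ∀ k ∈ Finset.Ico j0 j1, (∫ x in p k..p (k+1), h x) ≤
      (lam / n) * h (lam * (k + σ) / n) + (η / (2 * (c - a))) * (lam / n) := by
    intro k hk
    obtain ⟨m1, m2⟩ := node_mem ha hl hn hk
    have m3 := node_mem' ha hl hσ hσ1 hn hk
    have hlen : p (k+1) - p k = lam / n := by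
      simp only [hp]; push_cast; field_simp; ring
    have hle : p k ≤ p (k+1) := by
      have : 0 < lam / n := by positivity
      linarith
    have : (∫ x in p k..p (k+1), h x) ≤ ∫ x in p k..p (k+1), (h (lam * (k + σ) / n) + η / (2 * (c - a))) := by
      apply intervalIntegral.integral_mono_on hle (hint _ _ m1 hle m2) (by simp)
      intro x hx
      have hd := huc x ⟨m1.trans hx.1, hx.2.trans m2⟩ _ m3 (by
        rw [Real.dist_eq]
        have u1 : p k ≤ lam * (k + σ) / n := by
          simp only [hp]; gcongr; linarith
        have u2 : lam * (k + σ) / n ≤ p (k+1) := by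
          simp only [hp]; push_cast; gcongr
        have := abs_sub_le_of_le_of_le hx.1 hx.2 u1 u2
        linarith)
      rw [Real.dist_eq] at hd
      have := (abs_lt.1 hd).2
      linarith
    rw [intervalIntegral.integral_const, hlen, smul_eq_mul] at this
    linarith
  have s4 := Finset.sum_le_sum s3
  rw [s2, Finset.sum_add_distrib, ← Finset.mul_sum, Finset.sum_const, Nat.card_Ico, nsmul_eq_mul] at s4
  have s5 : ((j1 - j0 : ℕ) : ℝ) * (η / (2 * (c - a)) * (lam / n)) ≤ η / 2 := by
    have : ((j1 - j0 : ℕ) : ℝ) * (lam / n) = p j1 - p j0 := by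
      rw [Nat.cast_sub hj]; simp only [hp]; ring
    calc ((j1 - j0 : ℕ) : ℝ) * (η / (2 * (c - a)) * (lam / n))
        = η / (2 * (c - a)) * (((j1 - j0 : ℕ) : ℝ) * (lam / n)) := by ring
      _ ≤ η / (2 * (c - a)) * (c - a) := by
          rw [this]; gcongr
      _ = η / 2 := by field_simp
  have t1 := (le_abs_self _).trans (hbd a (p j0) le_rfl q0 (by linarith))
  have t2 := (le_abs_self _).trans (hbd (p j1) c (by linarith) q1 le_rfl)
  have t3 : B * (lam / n) ≤ η / 4 := by
    calc B * (lam / n) ≤ (B + 1) * (η / (4 * (B + 1))) := by gcongr; linarith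
      _ = η / 4 := by field_simp
  have t4 : B * (p j0 - a) ≤ B * (lam / n) := by gcongr; linarith
  have t5 : B * (c - p j1) ≤ B * (lam / n) := by gcongr; linarith
  linarith

lemma shrink {A C : ℝ} (hAC : A < C) {g : ℝ → ℝ} (hg : ContinuousOn g (Set.Icc A C))
    {η : ℝ} (hη : 0 < η) : ∃ a c, A < a ∧ a < c ∧ c < C ∧
      (∫ x in A..C, g x) - η ≤ ∫ x in a..c, g x := by
  obtain ⟨B, hB⟩ := isCompact_Icc.exists_bound_of_continuousOn hg
  have hB0 : 0 ≤ B := (norm_nonneg _).trans (hB A ⟨le_rfl, hAC.le⟩)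
  have hint : ∀ x y, A ≤ x → x ≤ y → y ≤ C → IntervalIntegrable g MeasureTheory.volume x y := by
    intro x y hx hxy hy
    apply ContinuousOn.intervalIntegrable
    rw [Set.uIcc_of_le hxy]
    exact hg.mono (Set.Icc_subset_Icc hx hy)
  have hbd : ∀ x y, A ≤ x → x ≤ y → y ≤ C → |∫ t in x..y, g t| ≤ B * (y - x) := by
    intro x y hx hxy hy
    have := intervalIntegral.norm_integral_le_of_norm_le_const (a := x) (b := y) (f := g) (C := B) (by
      intro t ht
      rw [Set.uIoc_of_le hxy] at ht
      exact hB t ⟨hx.trans ht.1.le, ht.2.trans hy⟩)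
    rwa [Real.norm_eq_abs, abs_of_nonneg (sub_nonneg.2 hxy)] at this
  obtain ⟨e, he0, he⟩ : ∃ e : ℝ, 0 < e ∧ e ≤ (C - A) / 3 ∧ B * e ≤ η / 2 := by
    refine ⟨min ((C - A) / 3) (η / (2 * (B + 1))), lt_min (by linarith) (by positivity), min_le_left _ _, ?_⟩
    calc B * min ((C - A) / 3) (η / (2 * (B + 1))) ≤ (B + 1) * (η / (2 * (B + 1))) := by
          apply mul_le_mul (by linarith) (min_le_right _ _) _ (by linarith)
          exact le_min (by linarith) (by positivity)
      _ = η / 2 := by field_simp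
  refine ⟨A + e, C - e, by linarith, by linarith, by linarith, ?_⟩
  have s1 : (∫ x in A..C, g x) = (∫ x in A..(A+e), g x) + (∫ x in (A+e)..(C-e), g x) + ∫ x in (C-e)..C, g x := by
    rw [intervalIntegral.integral_add_adjacent_intervals (hint _ _ le_rfl (by linarith) (by linarith))
      (hint _ _ (by linarith) (by linarith) (by linarith)), intervalIntegral.integral_add_adjacent_intervals
      (hint _ _ le_rfl (by linarith) (by linarith)) (hint _ _ (by linarith) (by linarith) le_rfl)]
  have t1 := (le_abs_self _).trans (hbd A (A+e) le_rfl (by linarith) (by linarith))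
  have t2 := (le_abs_self _).trans (hbd (C-e) C (by linarith) (by linarith) le_rfl)
  have t3 : B * (A + e - A) = B * e := by ring
  have t4 : B * (C - (C - e)) = B * e := by ring
  linarith

def Fam (P : ℕ → Polynomial ℂ) (γ : ℝ → ℂ) (lam σ a c : ℝ) : Prop :=
  ContinuousOn γ (Set.Icc a c) ∧
  (∃ M q : ℝ, 0 ≤ q ∧ q < 1 ∧ ∀ᶠ n : ℕ in atTop, ∀ k : ℕ, lam * (k + σ) / n ∈ Set.Icc a c →
    ∃ r ∈ (P n).roots, ‖γ (lam * (k + σ) / n) - r‖ ≤ M * q ^ n) ∧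
  ∃ c0 : ℝ, 0 < c0 ∧ ∀ x ∈ Set.Icc a c, ∀ y ∈ Set.Icc a c, c0 * |x - y| ≤ ‖γ x - γ y‖

lemma Fam.extract {P : ℕ → Polynomial ℂ} {γ : ℝ → ℂ} {lam σ a c : ℝ} (hF : Fam P γ lam σ a c)
    (ha : 0 ≤ a) (hac : a < c) (hl : 0 < lam) (hσ : 0 ≤ σ) (hσ1 : σ ≤ 1)
    {f : ℂ → ℝ} (hf : Continuous f) {η δ0 : ℝ} (hη : 0 < η) (hδ0 : 0 < δ0) :
    ∀ᶠ n : ℕ in atTop, ∃ T : Finset ℂ, (∀ r ∈ T, r ∈ (P n).roots) ∧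
      (∀ r ∈ T, ∃ x ∈ Set.Icc a c, ‖γ x - r‖ ≤ δ0) ∧
      (1 / lam) * (∫ x in a..c, f (γ x)) - η ≤ (1 / (n:ℝ)) * ∑ r ∈ T, f r := by
  obtain ⟨hγ, ⟨M, q, hq0, hq1, hroot⟩, c0, hc0, hsep⟩ := hF
  have hca : 0 < c - a := sub_pos.2 hac
  set η' := η * lam / (2 * (c - a)) with hη'
  have hη'0 : 0 < η' := by positivity
  have hK : IsCompact (γ '' Set.Icc a c) := isCompact_Icc.image_of_continuousOn hγ
  have huc := hK.uniformContinuousAt_of_continuousAt f (fun x _ => hf.continuousAt)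
    (Metric.dist_mem_uniformity hη'0)
  obtain ⟨δ, hδ, huc⟩ := Metric.mem_uniformity_dist.1 huc
  have hR := riemann ha hac hl hσ hσ1 (h := fun x => f (γ x) - η') (by
    exact (hf.comp_continuousOn hγ).sub continuousOn_const) (η := η * lam / 2) (by positivity)
  have l1 : Tendsto (fun n : ℕ => M * q ^ n) atTop (nhds 0) := by
    simpa using (tendsto_pow_atTop_nhds_zero_of_lt_one hq0 hq1).const_mul M
  have l2 : Tendsto (fun n : ℕ => 2 * M * ((n:ℝ) * q ^ n)) atTop (nhds 0) := by
    simpa using (tendsto_self_mul_const_pow_of_lt_one hq0 hq1).const_mul (2 * M)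
  filter_upwards [hroot, hR, l1.eventually (gt_mem_nhds hδ), l1.eventually (gt_mem_nhds hδ0),
    l2.eventually (gt_mem_nhds (show 0 < c0 * lam by positivity)), eventually_ge_atTop 1]
    with n h1 h2 h3 h4 h5 hn
  have hn0 : (0:ℝ) < n := by exact_mod_cast hn
  set A := Finset.Ico ⌈a * n / lam⌉₊ ⌊c * n / lam⌋₊ with hA
  have hx : ∀ k ∈ A, lam * (k + σ) / n ∈ Set.Icc a c := fun k hk => node_mem' ha hl hσ hσ1 hn hk
  have h1' : ∀ k : ℕ, ∃ r, k ∈ A → r ∈ (P n).roots ∧ ‖γ (lam * (k + σ) / n) - r‖ ≤ M * q ^ n := by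
    intro k
    by_cases hk : k ∈ A
    · obtain ⟨r, hr⟩ := h1 k (hx k hk)
      exact ⟨r, fun _ => hr⟩
    · exact ⟨0, fun h => absurd h hk⟩
  choose r hr using h1'
  have hinj : Set.InjOn r A := by
    intro i hi j hj hij
    by_contra hne
    have u1 := (hr i hi).2
    have u2 := (hr j hj).2
    rw [← hij, norm_sub_rev] at u2
    have u3 : ‖γ (lam * (i + σ) / n) - γ (lam * (j + σ) / n)‖ ≤ 2 * (M * q ^ n) := by
      have := norm_add_le (γ (lam * (i + σ) / n) - r i) (r i - γ (lam * (j + σ) / n))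
      rw [sub_add_sub_cancel] at this
      linarith
    have u4 := hsep _ (hx i hi) _ (hx j hj)
    have u5 : lam / n ≤ |lam * (i + σ) / n - lam * (j + σ) / n| := by
      have : lam * (i + σ) / n - lam * (j + σ) / n = (lam / n) * ((i:ℝ) - j) := by ring
      rw [this, abs_mul, abs_of_pos (by positivity)]
      have h1 : (1:ℝ) ≤ |(i:ℝ) - j| := by
        have : (1:ℤ) ≤ |(i:ℤ) - j| := Int.one_le_abs (sub_ne_zero.2 (by exact_mod_cast hne))
        exact_mod_cast this
      have : 0 < lam / n := by positivity
      nlinarith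
    have u6 : c0 * (lam / n) ≤ 2 * (M * q ^ n) := by
      have := mul_le_mul_of_nonneg_left u5 hc0.le
      linarith
    have u7 : c0 * (lam / n) * n ≤ 2 * (M * q ^ n) * n := by gcongr
    have u8 : c0 * (lam / n) * n = c0 * lam := by field_simp
    linarith
  refine ⟨A.image r, ?_, ?_, ?_⟩
  · intro w hw
    obtain ⟨k, hk, rfl⟩ := Finset.mem_image.1 hw
    exact (hr k hk).1
  · intro w hw
    obtain ⟨k, hk, rfl⟩ := Finset.mem_image.1 hw
    exact ⟨_, hx k hk, (hr k hk).2.trans h4.le⟩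
  · rw [Finset.sum_image hinj]
    have v1 : ∑ k ∈ A, (f (γ (lam * (k + σ) / n)) - η') ≤ ∑ k ∈ A, f (r k) := by
      apply Finset.sum_le_sum
      intro k hk
      have := @huc (γ (lam * (k + σ) / n)) (r k) (by
        rw [dist_eq_norm]; exact (hr k hk).2.trans_lt h3) ⟨_, hx k hk, rfl⟩
      have := (abs_lt.1 (show |f (γ (lam * (k + σ) / n)) - f (r k)| < η' from this)).2
      linarith
    have v2 : (∫ x in a..c, (f (γ x) - η')) = (∫ x in a..c, f (γ x)) - η * lam / 2 := by
      rw [intervalIntegral.integral_sub _ (by simp)]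
      · simp [hη']; field_simp
      · apply ContinuousOn.intervalIntegrable
        rw [Set.uIcc_of_le hac.le]
        exact hf.comp_continuousOn hγ
    rw [v2] at h2
    have v3 : lam / n * ∑ k ∈ A, (f (γ (lam * (k + σ) / n)) - η') ≤ lam / n * ∑ k ∈ A, f (r k) := by
      gcongr
    have v4 : (∫ x in a..c, f (γ x)) - η * lam ≤ lam / n * ∑ k ∈ A, f (r k) := by linarith
    have v5 := mul_le_mul_of_nonneg_left v4 (show 0 ≤ 1 / lam by positivity)
    have v6 : 1 / lam * (lam / n * ∑ k ∈ A, f (r k)) = (1 / (n:ℝ)) * ∑ k ∈ A, f (r k) := by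
      field_simp
    have v7 : 1 / lam * ((∫ x in a..c, f (γ x)) - η * lam) = (1 / lam) * (∫ x in a..c, f (γ x)) - η := by
      field_simp
    linarith

lemma chain_root {p : Polynomial ℂ} {n : ℕ} (hn : 1 ≤ n) (hp : p.degree = n) {γ : ℝ → ℂ} {x : ℝ}
    {γ' g' : ℂ} (hγ : HasDerivAt γ γ' x) (hg : HasDerivAt (fun y => p.eval (γ y)) g' x) :
    ∃ r ∈ p.roots, ‖γ x - r‖ * ‖g'‖ ≤ n * ‖p.eval (γ x)‖ * ‖γ'‖ := by
  obtain ⟨r, hr, h⟩ := root_near p n hn hp (γ x)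
  refine ⟨r, hr, ?_⟩
  have h1 : HasDerivAt (fun y => p.eval (γ y)) (p.derivative.eval (γ x) * γ') x :=
    (p.hasDerivAt (γ x)).comp x hγ
  rw [hg.unique h1, norm_mul, ← mul_assoc]
  gcongr

noncomputable def RR (b φ : ℝ) : ℝ := Real.sqrt (1 - b ^ 2 * (1 - Real.cos φ ^ 2))

noncomputable def xx (b φ : ℝ) : ℝ := b * (1 - Real.cos φ ^ 2) + Real.cos φ * RR b φ

noncomputable def rho (b φ : ℝ) : ℝ := RR b φ - b * Real.cos φ

lemma RR_arg_pos {b φ : ℝ} (h : 2 * b ^ 2 * (1 - Real.cos φ) < 1) :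
    0 < 1 - b ^ 2 * (1 - Real.cos φ ^ 2) := by
  have h1 := Real.cos_le_one φ
  have h2 := Real.neg_one_le_cos φ
  nlinarith [mul_nonneg (mul_nonneg (sq_nonneg b) (sub_nonneg.2 h1)) (sub_nonneg.2 h1)]

lemma RR_cont (b : ℝ) : Continuous (RR b) := by unfold RR; fun_prop

lemma xx_cont (b : ℝ) : Continuous (xx b) := by
  have := RR_cont b
  unfold xx; fun_prop

lemma rho_cont (b : ℝ) : Continuous (rho b) := by
  have := RR_cont b
  unfold rho; fun_prop

lemma rho_gt {b φ : ℝ} (hb : b < -1/2) (h : 2 * b ^ 2 * (1 - Real.cos φ) < 1) : -b < rho b φ := by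
  have h0 := RR_arg_pos h
  have h1 := Real.cos_le_one φ
  have : -b * (1 - Real.cos φ) < RR b φ := by
    apply Real.lt_sqrt_of_sq_lt
    nlinarith
  unfold rho; linarith

lemma RR_deriv {b φ : ℝ} (h : 2 * b ^ 2 * (1 - Real.cos φ) < 1) :
    HasDerivAt (RR b) (-(b ^ 2 * Real.sin φ * Real.cos φ) / RR b φ) φ := by
  have h0 := RR_arg_pos h
  have h1 : HasDerivAt (fun φ => 1 - b ^ 2 * (1 - Real.cos φ ^ 2))
      (-(b ^ 2 * (-(2 * Real.cos φ * (-Real.sin φ))))) φ := by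
    have := ((((Real.hasDerivAt_cos φ).pow 2).const_sub 1).const_mul (b ^ 2)).const_sub 1
    simpa using this
  have := h1.sqrt h0.ne'
  refine this.congr_deriv ?_
  unfold RR
  have : Real.sqrt (1 - b ^ 2 * (1 - Real.cos φ ^ 2)) ≠ 0 := (Real.sqrt_pos.2 h0).ne'
  field_simp

lemma xx_deriv {b φ : ℝ} (h : 2 * b ^ 2 * (1 - Real.cos φ) < 1) :
    HasDerivAt (xx b) (-(Real.sin φ * rho b φ ^ 2 / RR b φ)) φ := by
  have h0 := RR_arg_pos h
  have hR : 0 < RR b φ := Real.sqrt_pos.2 h0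
  have hR2 : RR b φ ^ 2 = 1 - b ^ 2 * (1 - Real.cos φ ^ 2) := Real.sq_sqrt h0.le
  have h1 := ((((Real.hasDerivAt_cos φ).pow 2).const_sub 1).const_mul b).add
    ((Real.hasDerivAt_cos φ).mul (RR_deriv h))
  refine (show HasDerivAt (xx b) _ φ from h1).congr_deriv ?_
  unfold rho
  simp
  field_simp
  rw [hR2]
  ring_nf
  simp [hR2]
  ring

lemma xx_sq {b φ : ℝ} (h : 2 * b ^ 2 * (1 - Real.cos φ) < 1) :
    -(rho b φ ^ 2 * Real.sin φ ^ 2) = xx b φ ^ 2 - 1 := by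
  have h0 := RR_arg_pos h
  have hR2 : RR b φ ^ 2 = 1 - b ^ 2 * (1 - Real.cos φ ^ 2) := Real.sq_sqrt h0.le
  have hs := Real.sin_sq φ
  rw [hs]
  unfold rho xx
  linear_combination (-1 : ℝ) * hR2

lemma eval1 {b φ : ℝ} {n : ℕ} {p : Polynomial ℂ} (h : 2 * b ^ 2 * (1 - Real.cos φ) < 1)
    (hp : ∀ z s : ℂ, s ^ 2 = z ^ 2 - 1 →
        p.eval z = (z - (b : ℂ) + s) ^ n + (z - (b : ℂ) - s) ^ n - (-(b : ℂ)) ^ n) :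
    p.eval ((xx b φ : ℝ) : ℂ) = ((rho b φ ^ n * (2 * Real.cos (n * φ)) - (-b) ^ n : ℝ) : ℂ) := by
  have h1 : xx b φ - b = rho b φ * Real.cos φ := by unfold xx rho; ring
  have h1' : ((xx b φ : ℝ) : ℂ) - b = rho b φ * Complex.cos φ := by exact_mod_cast congrArg (fun x : ℝ => (x:ℂ)) h1
  rw [hp _ (rho b φ * Complex.sin φ * Complex.I)]
  · rw [h1']
    have e1 : (rho b φ : ℂ) * Complex.cos φ + rho b φ * Complex.sin φ * Complex.I
        = rho b φ * (Complex.cos φ + Complex.sin φ * Complex.I) := by ring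
    have e2 : (rho b φ : ℂ) * Complex.cos φ - rho b φ * Complex.sin φ * Complex.I
        = rho b φ * (Complex.cos (-φ) + Complex.sin (-φ) * Complex.I) := by
      rw [Complex.cos_neg, Complex.sin_neg]; ring
    rw [e1, e2, mul_pow, mul_pow, Complex.cos_add_sin_mul_I_pow, Complex.cos_add_sin_mul_I_pow,
      mul_neg, Complex.cos_neg, Complex.sin_neg]
    push_cast
    ring
  · have := congrArg (fun x : ℝ => (x:ℂ)) (xx_sq h)
    push_cast at this
    rw [← this, mul_pow, Complex.I_sq]
    ring

lemma fam1 {b : ℝ} (hb : b < -1/2) {P : ℕ → Polynomial ℂ}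
    (hP : ∀ n, 1 ≤ n → (P n).degree = n ∧
      ∀ z s : ℂ, s ^ 2 = z ^ 2 - 1 →
        (P n).eval z = (z - (b : ℂ) + s) ^ n + (z - (b : ℂ) - s) ^ n - (-(b : ℂ)) ^ n)
    {a c : ℝ} (ha : 0 < a) (hac : a < c) (hc : c < Real.pi)
    (h : ∀ φ ∈ Set.Icc a c, 2 * b ^ 2 * (1 - Real.cos φ) < 1) :
    Fam P (fun φ => ((xx b φ : ℝ) : ℂ)) Real.pi (1/2) a c := by
  have hne : (Set.Icc a c).Nonempty := ⟨a, le_rfl, hac.le⟩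
  have hb0 : 0 < -b := by linarith
  -- derivative bounds
  have hRpos : ∀ φ ∈ Set.Icc a c, 0 < RR b φ := fun φ hφ => Real.sqrt_pos.2 (RR_arg_pos (h φ hφ))
  have hdc : ContinuousOn (fun φ => Real.sin φ * rho b φ ^ 2 / RR b φ) (Set.Icc a c) := by
    apply ContinuousOn.div
    · exact (Real.continuous_sin.mul ((rho_cont b).pow 2)).continuousOn
    · exact (RR_cont b).continuousOn
    · intro φ hφ; exact (hRpos φ hφ).ne'
  have hrho : ∀ φ ∈ Set.Icc a c, -b < rho b φ := fun φ hφ => rho_gt hb (h φ hφ)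
  have hdpos : ∀ φ ∈ Set.Icc a c, 0 < Real.sin φ * rho b φ ^ 2 / RR b φ := by
    intro φ hφ
    have h1 := Real.sin_pos_of_pos_of_lt_pi (ha.trans_le hφ.1) (hφ.2.trans_lt hc)
    have h2 := hRpos φ hφ
    have h3 := hb0.trans (hrho φ hφ)
    positivity
  refine ⟨(Complex.continuous_ofReal.comp (xx_cont b)).continuousOn, ?_, ?_⟩
  · obtain ⟨x1, hx1, hmax1⟩ := isCompact_Icc.exists_isMaxOn hne hdc
    obtain ⟨x2, hx2, hmin2⟩ := isCompact_Icc.exists_isMinOn hne (rho_cont b).continuousOn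
    set M := Real.sin x1 * rho b x1 ^ 2 / RR b x1 with hM
    have hr2 := hrho x2 hx2
    have hr2' : 0 < rho b x2 := hb0.trans hr2
    refine ⟨M, -b / rho b x2, by positivity, by rw [div_lt_one hr2']; exact hr2, ?_⟩
    filter_upwards [eventually_ge_atTop 1] with n hn k hk
    have hn0 : (0:ℝ) < n := by exact_mod_cast hn
    obtain ⟨hdeg, hev⟩ := hP n hn
    set φ := Real.pi * (k + 1/2) / n with hφ
    have hnφ : n * φ = Real.pi / 2 + k * Real.pi := by
      rw [hφ]; field_simp; ring
    have hcos : Real.cos (n * φ) = 0 := by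
      rw [hnφ, Real.cos_add_nat_mul_pi, Real.cos_pi_div_two, mul_zero]
    have hsin : |Real.sin (n * φ)| = 1 := by
      have := Real.sin_sq_add_cos_sq (n * φ)
      rw [hcos] at this
      rw [← abs_one, ← sq_eq_sq_iff_abs_eq_abs]; linarith
    have hxd : HasDerivAt (fun φ => ((xx b φ : ℝ) : ℂ)) ((-(Real.sin φ * rho b φ ^ 2 / RR b φ) : ℝ) : ℂ) φ :=
      (xx_deriv (h φ hk)).ofReal_comp
    have hrd : HasDerivAt (rho b) (-(b ^ 2 * Real.sin φ * Real.cos φ) / RR b φ - b * (-Real.sin φ)) φ :=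
      (RR_deriv (h φ hk)).sub ((Real.hasDerivAt_cos φ).const_mul b)
    have hcd : HasDerivAt (fun φ => 2 * Real.cos (n * φ)) (2 * (-Real.sin (n * φ) * (n * 1))) φ :=
      (((hasDerivAt_id φ).const_mul (n:ℝ)).cos).const_mul 2
    have hgd := ((hrd.pow n).mul hcd).sub_const ((-b) ^ n)
    have hgd2 : HasDerivAt (fun y => (P n).eval ((xx b y : ℝ) : ℂ))
        ((rho b φ ^ n * (2 * (-Real.sin (n * φ) * (n * 1))) : ℝ) : ℂ) φ := by
      have h1 := hgd.ofReal_comp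
      rw [hcos] at h1
      simp only [mul_zero, zero_add] at h1
      refine h1.congr_of_eventuallyEq ?_
      have hop : ∀ᶠ y in nhds φ, 2 * b ^ 2 * (1 - Real.cos y) < 1 := by
        have : Continuous (fun y => 2 * b ^ 2 * (1 - Real.cos y)) := by fun_prop
        exact this.continuousAt.eventually (gt_mem_nhds (h φ hk))
      filter_upwards [hop] with y hy
      exact eval1 hy hev
    obtain ⟨r, hr, hr'⟩ := chain_root hn hdeg hxd hgd2
    refine ⟨r, hr, ?_⟩
    rw [eval1 (h φ hk) hev, hcos] at hr'
    have hρ := hrho φ hk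
    have hρ0 : 0 < rho b φ := hb0.trans hρ
    have hD := hdpos φ hk
    simp only [Complex.norm_real, Real.norm_eq_abs, abs_mul, abs_neg, hsin, abs_pow,
      abs_of_pos hρ0, abs_of_pos hD, mul_zero, zero_sub, abs_of_pos hb0, Nat.abs_cast, abs_one, abs_two, mul_one, one_mul] at hr'
    have hDM : Real.sin φ * rho b φ ^ 2 / RR b φ ≤ M := hmax1 hk
    have hmin : rho b x2 ≤ rho b φ := hmin2 hk
    set X := ‖((xx b φ : ℝ) : ℂ) - r‖ with hX
    set D := Real.sin φ * rho b φ ^ 2 / RR b φ with hDdef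
    have hab : |b| = -b := abs_of_neg (by linarith)
    have k1 : X * rho b φ ^ n ≤ M * (-b) ^ n := by
      have k0 : n * (X * rho b φ ^ n * 2) ≤ n * (D * (-b) ^ n) := by
        linarith
      have k2 := le_of_mul_le_mul_left k0 hn0
      have k3 : D * (-b) ^ n ≤ M * (-b) ^ n := by gcongr
      have k4 : 0 ≤ X * rho b φ ^ n := by positivity
      linarith
    have k5 : X * rho b x2 ^ n ≤ M * (-b) ^ n := by
      refine le_trans ?_ k1
      gcongr
    show X ≤ _
    rw [div_pow, ← mul_div_assoc, le_div_iff₀ (by positivity)]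
    exact k5
  · obtain ⟨x1, hx1, hmin1⟩ := isCompact_Icc.exists_isMinOn hne hdc
    refine ⟨_, hdpos x1 hx1, ?_⟩
    set m := Real.sin x1 * rho b x1 ^ 2 / RR b x1 with hm
    have key : ∀ x ∈ Set.Icc a c, ∀ y ∈ Set.Icc a c, x ≤ y → m * (y - x) ≤ xx b x - xx b y := by
      intro x hx y hy hxy
      have := (convex_Icc a c).mul_sub_le_image_sub_of_le_deriv (f := fun x => - xx b x) (C := m)
        ((xx_cont b).neg.continuousOn) (by
          intro z hz
          exact (xx_deriv (h z (interior_subset hz))).neg.differentiableAt.differentiableWithinAt) (by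
          intro z hz
          have h1 := (xx_deriv (h z (interior_subset hz))).fun_neg.deriv
          rw [h1, neg_neg]
          exact hmin1 (interior_subset hz)) x hx y hy hxy
      linarith
    intro x hx y hy
    rw [← Complex.ofReal_sub, Complex.norm_real, Real.norm_eq_abs]
    rcases le_total x y with hxy | hxy
    · have := key x hx y hy hxy
      rw [abs_sub_comm, abs_of_nonneg (sub_nonneg.2 hxy)]
      exact this.trans (le_abs_self _)
    · have := key y hy x hx hxy
      rw [abs_of_nonneg (sub_nonneg.2 hxy), abs_sub_comm (xx b x)]
      exact this.trans (le_abs_self _)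

noncomputable def zt (b θ : ℝ) : ℂ := (b : ℂ) * (1 - Complex.exp (θ * Complex.I))

noncomputable def g2 (b θ : ℝ) : ℂ := (zt b θ + 1 / zt b θ) / 2

lemma zt_normSq (b θ : ℝ) : ‖zt b θ‖ ^ 2 = 2 * b ^ 2 * (1 - Real.cos θ) := by
  rw [← Complex.normSq_eq_norm_sq, Complex.normSq_apply]
  have h := Real.sin_sq_add_cos_sq θ
  simp [zt, Complex.exp_ofReal_mul_I_re, Complex.exp_ofReal_mul_I_im]
  linear_combination b ^ 2 * h

lemma zt_re (b θ : ℝ) : (zt b θ).re = b * (1 - Real.cos θ) := by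
  simp [zt, Complex.exp_ofReal_mul_I_re, Complex.exp_ofReal_mul_I_im]

lemma zt_norm_gt {b θ : ℝ} (h : 1 < 2 * b ^ 2 * (1 - Real.cos θ)) : 1 < ‖zt b θ‖ := by
  have := zt_normSq b θ
  nlinarith [norm_nonneg (zt b θ)]

lemma zt_ne {b θ : ℝ} (h : 0 < 2 * b ^ 2 * (1 - Real.cos θ)) : zt b θ ≠ 0 := by
  intro h0
  have := zt_normSq b θ
  rw [h0] at this
  simp at this
  simp only [mul_assoc] at h
  rcases this with h1 | h1 <;> simp [h1] at h

lemma zt_cont (b : ℝ) : Continuous (zt b) := by unfold zt; fun_prop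

lemma zt_deriv (b θ : ℝ) :
    HasDerivAt (zt b) (-((b : ℂ) * (Complex.exp (θ * Complex.I) * Complex.I))) θ := by
  have h1 : HasDerivAt (fun θ : ℝ => (θ : ℂ) * Complex.I) (1 * Complex.I) θ :=
    (Complex.ofRealCLM.hasDerivAt (x := θ)).mul_const Complex.I
  have := ((h1.cexp.const_sub 1).const_mul (b : ℂ))
  refine (show HasDerivAt (zt b) _ θ from this).congr_deriv ?_
  ring

lemma zt_deriv_norm (b θ : ℝ) : ‖-((b : ℂ) * (Complex.exp (θ * Complex.I) * Complex.I))‖ = |b| := by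
  simp [Complex.norm_exp_ofReal_mul_I]

lemma v_lt {b θ : ℝ} (h : 1 < 2 * b ^ 2 * (1 - Real.cos θ)) : ‖1 / zt b θ - b‖ < |b| := by
  have h1 := zt_norm_gt h
  have h0 : zt b θ ≠ 0 := zt_ne (by linarith)
  have e : 1 / zt b θ - b = (1 - b * zt b θ) / zt b θ := by field_simp
  rw [e, norm_div, div_lt_iff₀ (by linarith)]
  apply lt_of_pow_lt_pow_left₀ 2 (by positivity)
  rw [mul_pow, sq_abs, ← Complex.normSq_eq_norm_sq, ← Complex.normSq_eq_norm_sq, Complex.normSq_apply,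
    Complex.normSq_apply]
  have h2 := zt_re b θ
  simp only [Complex.sub_re, Complex.one_re, Complex.sub_im, Complex.one_im, Complex.re_ofReal_mul,
    Complex.im_ofReal_mul]
  have h3 : 1 < 2 * (b * (zt b θ).re) := by rw [h2]; linarith
  nlinarith

lemma eval2 {b θ : ℝ} {n : ℕ} {p : Polynomial ℂ} (h : zt b θ ≠ 0)
    (hp : ∀ z s : ℂ, s ^ 2 = z ^ 2 - 1 →
        p.eval z = (z - (b : ℂ) + s) ^ n + (z - (b : ℂ) - s) ^ n - (-(b : ℂ)) ^ n) :
    p.eval (g2 b θ) = (zt b θ - b) ^ n + (1 / zt b θ - b) ^ n - (-(b : ℂ)) ^ n := by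
  rw [hp _ ((zt b θ - 1 / zt b θ) / 2)]
  · unfold g2
    congr 3 <;> ring
  · unfold g2; field_simp; ring

lemma sin_lower {a y : ℝ} (ha : 0 < a) (hy : 0 ≤ y) (hya : y ≤ Real.pi - a) :
    2 * a / Real.pi ^ 2 * y ≤ Real.sin y := by
  have hpi := Real.pi_pos
  rcases le_total y (Real.pi / 2) with h | h
  · refine le_trans ?_ (Real.mul_le_sin hy h)
    apply mul_le_mul_of_nonneg_right _ hy
    rw [div_le_div_iff₀ (by positivity) hpi]
    nlinarith
  · have h1 := Real.mul_le_sin (x := Real.pi - y) (by linarith) (by linarith)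
    rw [Real.sin_pi_sub] at h1
    refine le_trans ?_ h1
    calc 2 * a / Real.pi ^ 2 * y ≤ 2 * a / Real.pi ^ 2 * Real.pi := by gcongr; linarith
      _ = 2 / Real.pi * a := by field_simp
      _ ≤ _ := by gcongr; linarith

lemma J_sub (z w : ℂ) (hz : z ≠ 0) (hw : w ≠ 0) :
    (z + 1 / z) / 2 - (w + 1 / w) / 2 = (z - w) * (1 - 1 / (z * w)) / 2 := by
  field_simp; ring

lemma zt_sub_norm (b x y : ℝ) : ‖zt b x - zt b y‖ = |b| * (2 * |Real.sin ((x - y) / 2)|) := by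
  have : zt b x - zt b y = -((b : ℂ) * Complex.exp (y * Complex.I) * (Complex.exp (Complex.I * ((x - y : ℝ) : ℂ)) - 1)) := by
    have e : Complex.exp (x * Complex.I) = Complex.exp (y * Complex.I) * Complex.exp (Complex.I * ((x - y : ℝ) : ℂ)) := by
      rw [← Complex.exp_add]
      push_cast
      ring_nf
    unfold zt
    rw [e]
    ring
  rw [this, norm_neg, norm_mul, norm_mul, Complex.norm_exp_I_mul_ofReal_sub_one,
    Complex.norm_exp_ofReal_mul_I]
  simp

lemma fam2 {b : ℝ} (hb : b < -1/2) {P : ℕ → Polynomial ℂ}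
    (hP : ∀ n, 1 ≤ n → (P n).degree = n ∧
      ∀ z s : ℂ, s ^ 2 = z ^ 2 - 1 →
        (P n).eval z = (z - (b : ℂ) + s) ^ n + (z - (b : ℂ) - s) ^ n - (-(b : ℂ)) ^ n)
    {a c : ℝ} (ha : 0 < a) (hac : a < c) (hc : c < 2 * Real.pi)
    (h : ∀ θ ∈ Set.Icc a c, 1 < 2 * b ^ 2 * (1 - Real.cos θ)) :
    Fam P (g2 b) (2 * Real.pi) 0 a c := by
  have hne : (Set.Icc a c).Nonempty := ⟨a, le_rfl, hac.le⟩
  have hb0 : 0 < |b| := abs_pos.2 (by linarith)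
  have hz : ∀ θ ∈ Set.Icc a c, zt b θ ≠ 0 := fun θ hθ => zt_ne (by linarith [h θ hθ])
  have hic : ContinuousOn (fun θ => 1 / zt b θ) (Set.Icc a c) :=
    continuousOn_const.div (zt_cont b).continuousOn hz
  refine ⟨((zt_cont b).continuousOn.add hic).div_const 2, ?_, ?_⟩
  · obtain ⟨x1, hx1, hmax1⟩ := isCompact_Icc.exists_isMaxOn hne
      ((hic.sub continuousOn_const).norm : ContinuousOn (fun θ => ‖1 / zt b θ - (b : ℂ)‖) _)
    have hv1 := v_lt (h x1 hx1)
    set V := ‖1 / zt b x1 - (b : ℂ)‖ with hV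
    have hV0 : 0 ≤ V := norm_nonneg _
    have hq1 : V / |b| < 1 := by rwa [div_lt_one hb0]
    have hq0 : 0 ≤ V / |b| := by positivity
    refine ⟨2 * |b|, V / |b|, hq0, hq1, ?_⟩
    have l1 : Tendsto (fun n : ℕ => (V / |b|) ^ (n - 1)) atTop (nhds 0) :=
      (tendsto_pow_atTop_nhds_zero_of_lt_one hq0 hq1).comp (tendsto_sub_atTop_nat 1)
    filter_upwards [eventually_ge_atTop 1, l1.eventually (gt_mem_nhds (show (0:ℝ) < 1/2 by norm_num))]
      with n hn hsmall k hk
    have hn0 : (0:ℝ) < n := by exact_mod_cast hn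
    obtain ⟨hdeg, hev⟩ := hP n hn
    set θ := 2 * Real.pi * (k + 0) / n with hθ
    have hzθ := hz θ hk
    have hz1 := zt_norm_gt (h θ hk)
    have hexp : Complex.exp (θ * Complex.I) ^ n = 1 := by
      rw [← Complex.exp_nat_mul, Complex.exp_eq_one_iff]
      refine ⟨k, ?_⟩
      rw [hθ]
      push_cast
      have : (n : ℂ) ≠ 0 := by exact_mod_cast hn0.ne'
      field_simp
      ring
    have hzb : zt b θ - b = -b * Complex.exp (θ * Complex.I) := by unfold zt; ring
    set ζ' := -((b : ℂ) * (Complex.exp (θ * Complex.I) * Complex.I)) with hζ'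
    have hζn : ‖ζ'‖ = |b| := zt_deriv_norm b θ
    have hd := zt_deriv b θ
    have hid : HasDerivAt (fun θ => 1 / zt b θ) (-ζ' / zt b θ ^ 2) θ := by
      simp only [one_div]
      exact hd.fun_inv hzθ
    have hinv : ‖-ζ' / zt b θ ^ 2‖ ≤ |b| := by
      rw [norm_div, norm_neg, hζn, norm_pow]
      apply div_le_self hb0.le
      exact one_le_pow₀ hz1.le
    have hγd : HasDerivAt (g2 b) ((ζ' + -ζ' / zt b θ ^ 2) / 2) θ := (hd.add hid).div_const 2
    have hγn : ‖(ζ' + -ζ' / zt b θ ^ 2) / 2‖ ≤ |b| := by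
      rw [norm_div, Complex.norm_ofNat]
      have := norm_add_le ζ' (-ζ' / zt b θ ^ 2)
      linarith
    have hgd : HasDerivAt (fun y => (zt b y - b) ^ n + (1 / zt b y - b) ^ n - (-(b : ℂ)) ^ n)
        (n * (zt b θ - b) ^ (n - 1) * ζ' + n * (1 / zt b θ - b) ^ (n - 1) * (-ζ' / zt b θ ^ 2)) θ :=
      (((hd.sub_const (b:ℂ)).pow n).add ((hid.sub_const (b:ℂ)).pow n)).sub_const _
    have hgd2 : HasDerivAt (fun y => (P n).eval (g2 b y))
        (n * (zt b θ - b) ^ (n - 1) * ζ' + n * (1 / zt b θ - b) ^ (n - 1) * (-ζ' / zt b θ ^ 2)) θ := by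
      refine hgd.congr_of_eventuallyEq ?_
      filter_upwards [(zt_cont b).continuousAt.eventually_ne hzθ] with y hy
      exact eval2 hy hev
    obtain ⟨r, hr, hr'⟩ := chain_root hn hdeg hγd hgd2
    refine ⟨r, hr, ?_⟩
    have hval : (P n).eval (g2 b θ) = (1 / zt b θ - b) ^ n := by
      rw [eval2 hzθ hev, hzb, mul_pow, hexp]; ring
    have hvV : ‖1 / zt b θ - (b : ℂ)‖ ≤ V := hmax1 hk
    have hvaln : ‖(P n).eval (g2 b θ)‖ ≤ V ^ n := by
      rw [hval, norm_pow]; gcongr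
    have hVs : V ^ (n - 1) ≤ |b| ^ (n - 1) / 2 := by
      rw [div_pow, div_lt_iff₀ (by positivity)] at hsmall
      linarith
    have hbn : |b| ^ (n - 1) * |b| = |b| ^ n := pow_sub_one_mul (by omega) _
    have hlow : n * (|b| ^ n / 2) ≤
        ‖n * (zt b θ - b) ^ (n - 1) * ζ' + n * (1 / zt b θ - b) ^ (n - 1) * (-ζ' / zt b θ ^ 2)‖ := by
      have a1 : ‖(n:ℂ) * (zt b θ - b) ^ (n - 1) * ζ'‖ = n * |b| ^ n := by
        rw [hzb, norm_mul, norm_mul, norm_pow, norm_mul, hζn, Complex.norm_exp_ofReal_mul_I]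
        simp [mul_assoc, hbn]
      have a2 : ‖(n:ℂ) * (1 / zt b θ - b) ^ (n - 1) * (-ζ' / zt b θ ^ 2)‖ ≤ n * (|b| ^ n / 2) := by
        rw [norm_mul, norm_mul, norm_pow, Complex.norm_natCast, mul_assoc]
        have : ‖1 / zt b θ - (b : ℂ)‖ ^ (n - 1) * ‖-ζ' / zt b θ ^ 2‖ ≤ (|b| ^ (n - 1) / 2) * |b| := by
          apply mul_le_mul _ hinv (norm_nonneg _) (by positivity)
          refine le_trans ?_ hVs
          gcongr
        have h3 : (|b| ^ (n - 1) / 2) * |b| = |b| ^ n / 2 := by rw [← hbn]; ring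
        rw [h3] at this
        gcongr
      have a3 := norm_sub_le_norm_add ((n:ℂ) * (zt b θ - b) ^ (n - 1) * ζ')
        ((n:ℂ) * (1 / zt b θ - b) ^ (n - 1) * (-ζ' / zt b θ ^ 2))
      rw [a1] at a3
      linarith
    set X := ‖g2 b θ - r‖ with hX
    have k1 : X * (n * (|b| ^ n / 2)) ≤ n * V ^ n * |b| := by
      calc X * (n * (|b| ^ n / 2)) ≤ _ := mul_le_mul_of_nonneg_left hlow (norm_nonneg _)
        _ ≤ _ := hr'
        _ ≤ n * V ^ n * |b| := by gcongr
    rw [div_pow, ← mul_div_assoc, le_div_iff₀ (by positivity)]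
    have k2 : n * (X * |b| ^ n) ≤ n * (2 * |b| * V ^ n) := by linarith
    exact le_of_mul_le_mul_left k2 hn0
  · obtain ⟨x1, hx1, hmin1⟩ := isCompact_Icc.exists_isMinOn hne (zt_cont b).norm.continuousOn
    have hm1 := zt_norm_gt (h x1 hx1)
    set m := ‖zt b x1‖ with hm
    have hfac : 0 < 1 - 1 / m := by
      have : 1 / m < 1 := by rw [div_lt_one (by linarith)]; exact hm1
      linarith
    set e := Real.pi - (c - a) / 2 with he
    have he0 : 0 < e := by rw [he]; linarith
    have hpi := Real.pi_pos
    refine ⟨|b| * (2 * e / Real.pi ^ 2) * (1 - 1 / m) / 2, by positivity, ?_⟩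
    intro x hx y hy
    unfold g2
    rw [J_sub _ _ (hz x hx) (hz y hy), norm_div, norm_mul, zt_sub_norm, Complex.norm_ofNat]
    have s1 : 2 * e / Real.pi ^ 2 * |x - y| ≤ 2 * |Real.sin ((x - y) / 2)| := by
      have h1 : |x - y| ≤ c - a := abs_sub_le_of_le_of_le hx.1 hx.2 hy.1 hy.2
      have h2 := sin_lower he0 (y := |x - y| / 2) (by positivity) (by rw [he]; linarith)
      have h3 : |Real.sin ((x - y) / 2)| = |Real.sin (|x - y| / 2)| := by
        rcases abs_cases (x - y) with ⟨h, _⟩ | ⟨h, _⟩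
        · rw [h]
        · rw [h, neg_div, Real.sin_neg, abs_neg]
      rw [h3]
      have := le_abs_self (Real.sin (|x - y| / 2))
      linarith
    have s2 : 1 - 1 / m ≤ ‖1 - 1 / (zt b x * zt b y)‖ := by
      have h1 := norm_sub_norm_le (1:ℂ) (1 / (zt b x * zt b y))
      have h2 : ‖1 / (zt b x * zt b y)‖ ≤ 1 / m := by
        rw [norm_div, norm_one, norm_mul]
        have q1 : m ≤ ‖zt b x‖ := hmin1 hx
        have q2 := (zt_norm_gt (h y hy)).le
        apply one_div_le_one_div_of_le (by linarith)
        nlinarith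
      rw [norm_one] at h1
      linarith
    calc |b| * (2 * e / Real.pi ^ 2) * (1 - 1 / m) / 2 * |x - y|
        = (|b| * (2 * e / Real.pi ^ 2 * |x - y|)) * (1 - 1 / m) / 2 := by ring
      _ ≤ _ := by gcongr

lemma cross {x m : ℝ} {z : ℂ} (hx : x ^ 2 ≤ 1) (hm : 1 < m) (hz : m ≤ ‖z‖) :
    (m - 1) * (1 - 1 / m) / 2 ≤ ‖(z + 1 / z) / 2 - (x : ℂ)‖ := by
  have hx1 := abs_le.1 ((sq_le_one_iff_abs_le_one x).1 hx)
  have hcos := Real.cos_arccos hx1.1 hx1.2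
  set τ := Real.arccos x
  set e := Complex.exp (τ * Complex.I) with he
  have hen : ‖e‖ = 1 := Complex.norm_exp_ofReal_mul_I τ
  have he0 : e ≠ 0 := Complex.exp_ne_zero _
  have hz0 : z ≠ 0 := by rintro rfl; simp at hz; linarith
  have hxe : (x : ℂ) = (e + 1 / e) / 2 := by
    rw [← hcos, Complex.ofReal_cos, Complex.cos, he, one_div, ← Complex.exp_neg]
    ring_nf
  rw [hxe, J_sub _ _ hz0 he0, norm_div, norm_mul, Complex.norm_ofNat]
  have h1 := norm_sub_norm_le z e
  have h2 := norm_sub_norm_le (1:ℂ) (1 / (z * e))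
  have h3 : ‖1 / (z * e)‖ ≤ 1 / m := by
    rw [norm_div, norm_one, norm_mul, hen, mul_one]
    exact one_div_le_one_div_of_le (by linarith) hz
  rw [norm_one] at h2
  have h4 : 1 / m ≤ 1 := by rw [div_le_one (by linarith)]; exact hm.le
  have : (m - 1) * (1 - 1 / m) ≤ ‖z - e‖ * ‖1 - 1 / (z * e)‖ := by
    apply mul_le_mul <;> linarith [norm_nonneg (z - e)]
  linarith

lemma lower {b : ℝ} (hb : b < -1/2) {P : ℕ → Polynomial ℂ}
    (hP : ∀ n, 1 ≤ n → (P n).degree = n ∧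
      ∀ z s : ℂ, s ^ 2 = z ^ 2 - 1 →
        (P n).eval z = (z - (b : ℂ) + s) ^ n + (z - (b : ℂ) - s) ^ n - (-(b : ℂ)) ^ n)
    {α : ℝ} (hα0 : 0 < α) (hα1 : α < Real.pi) (hα : 2 * b ^ 2 * (1 - Real.cos α) = 1)
    (hg2 : ContinuousOn (g2 b) (Set.Icc α (2 * Real.pi - α)))
    {f : ℂ → ℝ} (hf : Continuous f) (hf0 : ∀ z, 0 ≤ f z) {η : ℝ} (hη : 0 < η) :
    ∀ᶠ n : ℕ in atTop, (1 / Real.pi) * (∫ φ in (0:ℝ)..α, f ((xx b φ : ℝ) : ℂ)) +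
      (1 / (2 * Real.pi)) * (∫ θ in α..(2 * Real.pi - α), f (g2 b θ)) - η ≤
      (1 / (n : ℝ)) * ((P n).roots.map (fun z => f z)).sum := by
  have hpi := Real.pi_pos
  have hpi3 := Real.pi_gt_three
  have hb2 : 0 < 2 * b ^ 2 := by nlinarith
  obtain ⟨a1, c1, ha1, hac1, hc1, hi1⟩ := shrink hα0 (g := fun φ => f ((xx b φ : ℝ) : ℂ))
    (hf.comp (Complex.continuous_ofReal.comp (xx_cont b))).continuousOn (show 0 < η / 4 by positivity)
  obtain ⟨a2, c2, ha2, hac2, hc2, hi2⟩ := shrink (show α < 2 * Real.pi - α by linarith) (g := fun φ => f (g2 b φ))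
    (hf.comp_continuousOn hg2) (show 0 < η / 4 by positivity)
  have h1 : ∀ φ ∈ Set.Icc a1 c1, 2 * b ^ 2 * (1 - Real.cos φ) < 1 := by
    intro φ hφ
    have : Real.cos α < Real.cos φ :=
      Real.cos_lt_cos_of_nonneg_of_le_pi (by linarith [hφ.1]) hα1.le (by linarith [hφ.2])
    nlinarith
  have h2 : ∀ θ ∈ Set.Icc a2 c2, 1 < 2 * b ^ 2 * (1 - Real.cos θ) := by
    intro θ hθ
    have : Real.cos θ < Real.cos α := by
      rcases le_total θ Real.pi with h | h
      · exact Real.cos_lt_cos_of_nonneg_of_le_pi hα0.le h (by linarith [hθ.1])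
      · rw [← Real.cos_two_pi_sub θ]
        exact Real.cos_lt_cos_of_nonneg_of_le_pi hα0.le (by linarith) (by linarith [hθ.2])
    nlinarith
  have F1 := fam1 hb hP ha1 hac1 (by linarith) h1
  have F2 := fam2 hb hP (by linarith) hac2 (by linarith) h2
  obtain ⟨x1, hx1, hmin1⟩ := (isCompact_Icc (a := a2) (b := c2)).exists_isMinOn ⟨a2, le_rfl, hac2.le⟩
    (zt_cont b).norm.continuousOn
  have hm1 := zt_norm_gt (h2 x1 hx1)
  set m := ‖zt b x1‖ with hm
  set d := (m - 1) * (1 - 1 / m) / 2 with hd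
  have hd0 : 0 < d := by
    have : 1 / m < 1 := by rw [div_lt_one (by linarith)]; exact hm1
    have h3 : 0 < 1 - 1 / m := by linarith
    have h4 : 0 < m - 1 := by linarith
    positivity
  have E1 := F1.extract ha1.le hac1 hpi (by norm_num) (by norm_num) hf (show 0 < η / 4 by positivity)
    (show 0 < d / 3 by positivity)
  have E2 := F2.extract (by linarith) hac2 (show 0 < 2 * Real.pi by positivity) le_rfl zero_le_one hf
    (show 0 < η / 4 by positivity) (show 0 < d / 3 by positivity)
  filter_upwards [E1, E2, eventually_ge_atTop 1] with n ⟨T1, r1, k1, s1⟩ ⟨T2, r2, k2, s2⟩ hn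
  have hn0 : (0:ℝ) < n := by exact_mod_cast hn
  have hdis : Disjoint T1 T2 := by
    rw [Finset.disjoint_left]
    intro r hr1 hr2
    obtain ⟨φ, hφ, u1⟩ := k1 r hr1
    obtain ⟨θ, hθ, u2⟩ := k2 r hr2
    have hsq : xx b φ ^ 2 ≤ 1 := by
      have := xx_sq (h1 φ hφ)
      nlinarith [mul_nonneg (sq_nonneg (rho b φ)) (sq_nonneg (Real.sin φ))]
    have u3 := cross hsq hm1 (hmin1 hθ : m ≤ ‖zt b θ‖)
    have u4 := norm_sub_le_norm_sub_add_norm_sub (g2 b θ) r ((xx b φ : ℝ) : ℂ)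
    rw [norm_sub_rev r] at u4
    unfold g2 at u4 u2
    linarith
  have hle : (T1 ∪ T2).val ≤ (P n).roots := by
    rw [Multiset.le_iff_subset (T1 ∪ T2).nodup]
    intro r hr
    rcases Finset.mem_union.1 (show r ∈ T1 ∪ T2 from hr) with h | h
    · exact r1 r h
    · exact r2 r h
  obtain ⟨u, hu⟩ := Multiset.le_iff_exists_add.1 hle
  have hsum : ∑ r ∈ T1, f r + ∑ r ∈ T2, f r ≤ ((P n).roots.map (fun z => f z)).sum := by
    rw [← Finset.sum_union hdis, hu, Multiset.map_add, Multiset.sum_add]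
    have : 0 ≤ (u.map (fun z => f z)).sum := by
      apply Multiset.sum_nonneg
      intro x hx
      obtain ⟨z, _, rfl⟩ := Multiset.mem_map.1 hx
      exact hf0 z
    have e : ∑ r ∈ T1 ∪ T2, f r = ((T1 ∪ T2).val.map (fun z => f z)).sum := rfl
    linarith
  have hsum2 := mul_le_mul_of_nonneg_left hsum (show 0 ≤ 1 / (n:ℝ) by positivity)
  rw [mul_add] at hsum2
  have i1 := mul_le_mul_of_nonneg_left hi1 (show 0 ≤ 1 / Real.pi by positivity)
  have i2 := mul_le_mul_of_nonneg_left hi2 (show 0 ≤ 1 / (2 * Real.pi) by positivity)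
  rw [mul_sub] at i1 i2
  have j1 : 1 / Real.pi * (η / 4) ≤ 1 * (η / 4) := by
    gcongr
    rw [div_le_one hpi]; linarith
  have j2 : 1 / (2 * Real.pi) * (η / 4) ≤ 1 * (η / 4) := by
    gcongr
    rw [div_le_one (by positivity)]; linarith
  linarith

lemma subst1 {α : ℝ} (hα0 : 0 < α) (hα1 : α < Real.pi) (G : ℝ → ℝ) :
    (∫ t in (Real.cos α)..1, G t / Real.sqrt (1 - t ^ 2)) = ∫ φ in (0:ℝ)..α, G (Real.cos φ) := by
  have hle : Real.cos α ≤ 1 := Real.cos_le_one α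
  have himg : Real.cos '' Set.Ioo 0 α = Set.Ioo (Real.cos α) 1 := by
    ext t
    constructor
    · rintro ⟨φ, hφ, rfl⟩
      refine ⟨Real.cos_lt_cos_of_nonneg_of_le_pi hφ.1.le hα1.le hφ.2, ?_⟩
      rw [← Real.cos_zero]
      exact Real.cos_lt_cos_of_nonneg_of_le_pi le_rfl (by linarith [hφ.2]) hφ.1
    · intro ht
      have h1 := Real.neg_one_le_cos α
      refine ⟨Real.arccos t, ⟨Real.arccos_pos.2 ht.2, ?_⟩, Real.cos_arccos (by linarith [ht.1]) ht.2.le⟩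
      have := Real.arccos_lt_arccos h1 ht.1 ht.2.le
      rwa [Real.arccos_cos hα0.le hα1.le] at this
  rw [intervalIntegral.integral_of_le hle, intervalIntegral.integral_of_le hα0.le,
    MeasureTheory.integral_Ioc_eq_integral_Ioo, MeasureTheory.integral_Ioc_eq_integral_Ioo, ← himg]
  rw [MeasureTheory.integral_image_eq_integral_abs_deriv_smul measurableSet_Ioo
    (fun x _ => (Real.hasDerivAt_cos x).hasDerivWithinAt)]
  · apply MeasureTheory.setIntegral_congr_fun measurableSet_Ioo
    intro φ hφ
    have hs := Real.sin_pos_of_pos_of_lt_pi hφ.1 (hφ.2.trans hα1)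
    have : Real.sqrt (1 - Real.cos φ ^ 2) = Real.sin φ := by
      rw [← Real.sin_sq, Real.sqrt_sq hs.le]
    simp only [this, abs_neg, abs_of_pos hs, smul_eq_mul]
    field_simp
  · apply Real.injOn_cos.mono
    intro φ hφ
    exact ⟨hφ.1.le, (hφ.2.trans hα1).le⟩



/-- Let `b` be real with `b < −1/2`, `β = 1 − 1/(2b²)`, `α = arccos β`.
For `n ≥ 1` let `P n` be the unique polynomial of degree `n` with
`P_n(z) = (z − b + s)ⁿ + (z − b − s)ⁿ − (−b)ⁿ` (`s² = z² − 1`). Then for every bounded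
continuous `f : ℂ → ℝ`, the averages `(1/n) Σ f(z)` over the roots of `P n` (with
multiplicity) converge to
`(1/π) ∫_β^1 f(b(1 − t²) + t√(1 − b²(1 − t²))) dt/√(1 − t²)
  + (1/(2π)) ∫_α^{2π−α} f((ζ(θ) + 1/ζ(θ))/2) dθ`, where `ζ(θ) = b(1 − e^{iθ})`. -/
theorem stmt_14 (b : ℝ) (hb : b < -1/2)
    (β : ℝ) (hβ : β = 1 - 1 / (2 * b ^ 2))
    (α : ℝ) (hα : α = Real.arccos β)
    (P : ℕ → Polynomial ℂ)
    (hP : ∀ n, 1 ≤ n → (P n).degree = n ∧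
      ∀ z s : ℂ, s ^ 2 = z ^ 2 - 1 →
        (P n).eval z = (z - (b : ℂ) + s) ^ n + (z - (b : ℂ) - s) ^ n - (-(b : ℂ)) ^ n) :
    ∀ f : BoundedContinuousFunction ℂ ℝ,
      Tendsto (fun n : ℕ => (1 / (n : ℝ)) * ((P n).roots.map (fun z => f z)).sum) atTop
        (nhds
          ((1 / Real.pi) *
            (∫ t in β..1,
              f (((b * (1 - t ^ 2) + t * Real.sqrt (1 - b ^ 2 * (1 - t ^ 2)) : ℝ) : ℂ)) /
                Real.sqrt (1 - t ^ 2)) +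
          (1 / (2 * Real.pi)) *
            (∫ θ in α..(2 * Real.pi - α),
              f (((b : ℂ) * (1 - Complex.exp (θ * Complex.I)) +
                  1 / ((b : ℂ) * (1 - Complex.exp (θ * Complex.I)))) / 2)))) := by
  intro f
  have hpi := Real.pi_pos
  have hb2 : 1 / 4 < b ^ 2 := by nlinarith
  have hβ1 : β < 1 := by
    have : 0 < 1 / (2 * b ^ 2) := by positivity
    linarith
  have hβ0 : -1 < β := by
    have : 1 / (2 * b ^ 2) < 2 := by rw [div_lt_iff₀ (by positivity)]; linarith
    linarith
  have hcos : Real.cos α = β := by rw [hα, Real.cos_arccos hβ0.le hβ1.le]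
  have hα0 : 0 < α := by rw [hα]; exact Real.arccos_pos.2 hβ1
  have hα1 : α < Real.pi := by
    rw [hα, ← Real.arccos_neg_one]
    exact Real.arccos_lt_arccos le_rfl hβ0 hβ1.le
  have hα2 : 2 * b ^ 2 * (1 - Real.cos α) = 1 := by
    have : b ≠ 0 := by linarith
    rw [hcos, hβ]; field_simp; ring
  have hg2 : ContinuousOn (g2 b) (Set.Icc α (2 * Real.pi - α)) := by
    have hz : ∀ θ ∈ Set.Icc α (2 * Real.pi - α), zt b θ ≠ 0 := by
      intro θ hθ
      have : Real.cos θ ≤ Real.cos α := by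
        rcases le_total θ Real.pi with h | h
        · exact Real.cos_le_cos_of_nonneg_of_le_pi hα0.le h hθ.1
        · rw [← Real.cos_two_pi_sub θ]
          exact Real.cos_le_cos_of_nonneg_of_le_pi hα0.le (by linarith) (by linarith [hθ.2])
      apply zt_ne
      nlinarith
    exact ((zt_cont b).continuousOn.add (continuousOn_const.div (zt_cont b).continuousOn hz)).div_const 2
  have hs := subst1 hα0 hα1 (fun t => f (((b * (1 - t ^ 2) + t * Real.sqrt (1 - b ^ 2 * (1 - t ^ 2)) : ℝ) : ℂ)))
  rw [hcos] at hs
  rw [hs]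
  change Tendsto _ _ (nhds ((1 / Real.pi) * (∫ φ in (0:ℝ)..α, f ((xx b φ : ℝ) : ℂ)) +
      (1 / (2 * Real.pi)) * (∫ θ in α..(2 * Real.pi - α), f (g2 b θ))))
  have ii1 : IntervalIntegrable (fun φ => f ((xx b φ : ℝ) : ℂ)) MeasureTheory.volume 0 α :=
    (f.continuous.comp (Complex.continuous_ofReal.comp (xx_cont b))).intervalIntegrable _ _
  have ii2 : IntervalIntegrable (fun θ => f (g2 b θ)) MeasureTheory.volume α (2 * Real.pi - α) := by
    apply ContinuousOn.intervalIntegrable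
    rw [Set.uIcc_of_le (by linarith)]
    exact f.continuous.comp_continuousOn hg2
  have hcard : ∀ n, 1 ≤ n → ((P n).roots.card : ℝ) = n := by
    intro n hn
    rw [← (IsAlgClosed.splits (P n)).natDegree_eq_card_roots,
      Polynomial.natDegree_eq_of_degree_eq_some (hP n hn).1]
  have hfb : ∀ z, |f z| ≤ ‖f‖ := fun z => f.norm_coe_le_norm z
  set L := (1 / Real.pi) * (∫ φ in (0:ℝ)..α, f ((xx b φ : ℝ) : ℂ)) +
      (1 / (2 * Real.pi)) * (∫ θ in α..(2 * Real.pi - α), f (g2 b θ)) with hL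
  rw [Metric.tendsto_nhds]
  intro ε hε
  have lo := lower hb hP hα0 hα1 hα2 hg2 (f := fun z => f z + ‖f‖) (f.continuous.add continuous_const)
    (fun z => by linarith [(abs_le.1 (hfb z)).1]) (half_pos hε)
  have up := lower hb hP hα0 hα1 hα2 hg2 (f := fun z => ‖f‖ - f z) (continuous_const.sub f.continuous)
    (fun z => by linarith [(abs_le.1 (hfb z)).2]) (half_pos hε)
  have tot : (1 / Real.pi) * ((α - 0) * ‖f‖) + (1 / (2 * Real.pi)) * ((2 * Real.pi - α - α) * ‖f‖) = ‖f‖ := by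
    field_simp; ring
  filter_upwards [lo, up, eventually_ge_atTop 1] with n hlo hup hn
  have hn0 : (0:ℝ) < n := by exact_mod_cast hn
  rw [intervalIntegral.integral_add ii1 (by simp), intervalIntegral.integral_add ii2 (by simp),
    intervalIntegral.integral_const, intervalIntegral.integral_const, smul_eq_mul, smul_eq_mul,
    Multiset.sum_map_add, Multiset.map_const', Multiset.sum_replicate, nsmul_eq_mul, hcard n hn,
    mul_add, mul_add, mul_add] at hlo
  rw [intervalIntegral.integral_sub (by simp) ii1, intervalIntegral.integral_sub (by simp) ii2,
    intervalIntegral.integral_const, intervalIntegral.integral_const, smul_eq_mul, smul_eq_mul,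
    Multiset.sum_map_sub, Multiset.map_const', Multiset.sum_replicate, nsmul_eq_mul, hcard n hn,
    mul_sub, mul_sub, mul_sub] at hup
  have hc1 : 1 / (n:ℝ) * (n * ‖f‖) = ‖f‖ := by field_simp
  rw [Real.dist_eq, abs_lt]
  constructor <;> linarith
end

section
/- Let b ∈ ℂ with −1/2 ≤ Re b < 0 (corresponding to 1 < R cos θ ≤ 3/2). Then all zeros of f_n approach the arc 𝒜 as n → ∞: for every ε > 0 there exists N such that for all n ≥ N, every zero of f_n lies within distance ε of 𝒜. -/
lemma aux_key (b w w' : ℂ) (hb₁ : -1/2 ≤ b.re) (hb₂ : b.re < 0) (hw : w * w' = 1)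
    (h' : ‖w' - b‖ ≤ ‖b‖) : ‖b‖ ≤ ‖w - b‖ := by
  have hbpos : 0 < ‖b‖ := norm_pos_iff.2 (by rintro rfl; simp at hb₂)
  have h1 : ‖1 - b * w‖ ≤ ‖b * w‖ := by
    have : 1 - b * w = (w' - b) * w := by rw [← hw]; ring
    rw [this, norm_mul, norm_mul]
    gcongr
  have h2 : (1:ℝ)/2 ≤ (b * w).re := by
    have h3 : ‖1 - b * w‖^2 ≤ ‖b * w‖^2 := by gcongr
    rw [← Complex.normSq_eq_norm_sq, ← Complex.normSq_eq_norm_sq, Complex.normSq_apply,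
      Complex.normSq_apply] at h3
    simp only [Complex.sub_re, Complex.one_re, Complex.sub_im, Complex.one_im] at h3
    nlinarith
  have h4 : ‖b‖ * ‖b‖ ≤ ‖b‖ * ‖w - b‖ := by
    rw [← norm_mul b (w - b)]
    refine le_trans ?_ (Complex.re_le_norm _)
    rw [Complex.norm_mul_self_eq_normSq, Complex.normSq_apply]
    simp only [Complex.mul_re, Complex.sub_re, Complex.sub_im] at h2 ⊢
    nlinarith
  exact le_of_mul_le_mul_left h4 hbpos

lemma aux_arc (b z s : ℂ) (hb₁ : -1/2 ≤ b.re) (hb₂ : b.re < 0) (hs : s ^ 2 = z ^ 2 - 1)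
    (h : ‖z - b + s‖ = ‖z - b - s‖) :
    ∃ ρ : ℝ, ρ ∈ Set.Icc (0 : ℝ) 1 ∧ ∃ s : ℂ,
      s ^ 2 = (ρ : ℂ) * (1 - b ^ 2 + b ^ 2 * (ρ : ℂ)) ∧ z = b * (1 - (ρ : ℂ)) + s := by
  obtain ⟨u, hu⟩ : ∃ u, u = z - b + s := ⟨_, rfl⟩
  obtain ⟨v, hv⟩ : ∃ v, v = z - b - s := ⟨_, rfl⟩
  rw [← hu, ← hv] at h
  have hu0 : u ≠ 0 := by
    intro h0
    have hv0 : v = 0 := by rw [h0] at h; simpa using h.symm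
    have hzb : z = b := by linear_combination (h0 - hu + hv0 - hv)/2
    have hs0 : s = 0 := by linear_combination (h0 - hu - hv0 + hv)/2
    rw [hs0, hzb] at hs
    have : (b - 1) * (b + 1) = 0 := by linear_combination -hs
    rcases mul_eq_zero.1 this with h | h
    · rw [sub_eq_zero.1 h] at hb₂; norm_num at hb₂
    · rw [eq_neg_of_add_eq_zero_left h] at hb₁; norm_num at hb₁
  have hup : 0 < ‖u‖ := norm_pos_iff.2 hu0
  have huv : u * v = b^2 + 1 - 2 * b * z := by rw [hu, hv]; linear_combination -hs
  have huv2 : u + v = 2 * (z - b) := by rw [hu, hv]; ring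
  have hcu : (‖u‖ : ℂ)^2 ≠ 0 := by exact_mod_cast (pow_pos hup 2).ne'
  have e1 : (‖u + v‖ : ℂ)^2 * (u * v) = (u + v)^2 * (‖u‖ : ℂ)^2 := by
    have a1 := Complex.mul_conj' u
    have a2 := Complex.mul_conj' v
    have a3 := Complex.mul_conj' (u + v)
    rw [← h] at a2
    rw [map_add] at a3
    rw [← a3]
    linear_combination (u+v) * u * a2 + (u+v) * v * a1
  have hρ : (z - b)^2 = ((‖u + v‖^2 / (4 * ‖u‖^2) : ℝ) : ℂ) * (b^2 + 1 - 2 * b * z) := by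
    rw [← huv]
    push_cast
    rw [div_mul_eq_mul_div, e1, huv2, eq_div_iff (mul_ne_zero (by norm_num) hcu)]; ring
  refine ⟨‖u + v‖^2 / (4 * ‖u‖^2), ⟨by positivity, ?_⟩, z - b * (1 - ((‖u + v‖^2 / (4 * ‖u‖^2) : ℝ) : ℂ)), ?_, by ring⟩
  · rw [div_le_one (by positivity)]
    have := norm_add_le u v
    rw [← h] at this
    nlinarith [norm_nonneg (u+v)]
  · linear_combination hρ

lemma aux_far (b z s : ℂ) (hs : s ^ 2 = z ^ 2 - 1) (hz : 20 * (‖b‖ + 1) ≤ ‖z‖) :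
    ‖b‖ ≤ 1/2 * max ‖z - b + s‖ ‖z - b - s‖ * (1/2) ∧
    min ‖z - b + s‖ ‖z - b - s‖ ≤ 1/2 * max ‖z - b + s‖ ‖z - b - s‖ * (1/2) := by
  set u := z - b + s with hu
  set v := z - b - s with hv
  have huv : u * v = b^2 + 1 - 2 * b * z := by rw [hu, hv]; linear_combination -hs
  have huv2 : u + v = 2 * (z - b) := by rw [hu, hv]; ring
  have h1 : 2 * ‖z - b‖ ≤ ‖u‖ + ‖v‖ := by
    have := norm_add_le u v
    rw [huv2, norm_mul] at this
    simpa using this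
  have h2 : ‖z‖ - ‖b‖ ≤ ‖z - b‖ := norm_sub_norm_le z b
  have h3 : ‖u‖ * ‖v‖ ≤ ‖b‖^2 + 1 + 2 * ‖b‖ * ‖z‖ := by
    rw [← norm_mul, huv]
    refine (norm_sub_le _ _).trans ?_
    have := norm_add_le (b^2) 1
    simp only [norm_mul, norm_pow, norm_one, Complex.norm_ofNat] at this ⊢
    linarith
  have hb := norm_nonneg b
  have hM1 := le_max_left ‖u‖ ‖v‖
  have hM2 := le_max_right ‖u‖ ‖v‖
  have hmM := min_mul_max ‖u‖ ‖v‖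
  set M := max ‖u‖ ‖v‖
  set m := min ‖u‖ ‖v‖
  have hM : ‖z‖ - ‖b‖ ≤ M := by linarith
  refine ⟨by linarith, ?_⟩
  have hMp : 0 < M := by linarith
  have hM3 : 19/20 * ‖z‖ ≤ M := by linarith
  have h5 : (19/20 * ‖z‖)^2 ≤ M^2 := by gcongr; 
  have h6 : 4 * (m * M) ≤ M * M := by
    rw [hmM]; nlinarith
  have := le_of_mul_le_mul_right (by linarith : 4 * m * M ≤ M * M) hMp
  linarith

lemma aux_q (b : ℂ) (hb₁ : -1/2 ≤ b.re) (hb₂ : b.re < 0)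
    (A : Set ℂ)
    (hA : A = {z : ℂ | ∃ ρ : ℝ, ρ ∈ Set.Icc (0 : ℝ) 1 ∧ ∃ s : ℂ,
      s ^ 2 = (ρ : ℂ) * (1 - b ^ 2 + b ^ 2 * (ρ : ℂ)) ∧ z = b * (1 - (ρ : ℂ)) + s})
    (ε : ℝ) (hε : 0 < ε) : ∃ q : ℝ, 0 ≤ q ∧ q < 1 ∧ ∀ z s : ℂ, s ^ 2 = z ^ 2 - 1 →
      (∀ w ∈ A, ε ≤ dist z w) →
      0 < max ‖z - b + s‖ ‖z - b - s‖ ∧ 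
      max (min ‖z - b + s‖ ‖z - b - s‖) ‖b‖ ≤ q * max ‖z - b + s‖ ‖z - b - s‖ := by
  have hbpos : 0 < ‖b‖ := norm_pos_iff.2 (by rintro rfl; simp at hb₂)
  have hlt : ∀ z s : ℂ, s ^ 2 = z ^ 2 - 1 → (∀ w ∈ A, ε ≤ dist z w) → 
      max (min ‖z - b + s‖ ‖z - b - s‖) ‖b‖ < max ‖z - b + s‖ ‖z - b - s‖ := by
    intro z s hs hd
    have hne : ‖z - b + s‖ ≠ ‖z - b - s‖ := by
      intro h
      have hz : z ∈ A := by rw [hA]; exact aux_arc b z s hb₁ hb₂ hs h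
      have := hd z hz
      simp at this; linarith
    have e1 : z - b + s = (z + s) - b := by ring
    have e2 : z - b - s = (z - s) - b := by ring
    have p1 : (z + s) * (z - s) = 1 := by linear_combination -hs
    have p2 : (z - s) * (z + s) = 1 := by linear_combination -hs
    refine max_lt (min_lt_max.2 hne) ?_
    by_contra hcon
    rw [not_lt, max_le_iff] at hcon
    apply hne
    have k1 := aux_key b (z+s) (z-s) hb₁ hb₂ p1 (by rw [← e2]; exact hcon.2)
    have k2 := aux_key b (z-s) (z+s) hb₁ hb₂ p2 (by rw [← e1]; exact hcon.1)
    rw [← e1] at k1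
    rw [← e2] at k2
    linarith [hcon.1, hcon.2]
  set R := 20 * (‖b‖ + 1) with hR
  let K : Set (ℂ × ℂ) := {p | p.2 ^ 2 = p.1 ^ 2 - 1 ∧ (∀ w ∈ A, ε ≤ dist p.1 w) ∧ ‖p.1‖ ≤ R}
  have hKc : IsCompact K := by
    refine Metric.isCompact_of_isClosed_isBounded ?_ ?_
    · have c1 : IsClosed {p : ℂ × ℂ | p.2 ^ 2 = p.1 ^ 2 - 1} :=
        isClosed_eq (by fun_prop) (by fun_prop)
      have c2 : IsClosed {p : ℂ × ℂ | ‖p.1‖ ≤ R} := isClosed_le (by fun_prop) (by fun_prop)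
      refine c1.inter (IsClosed.inter ?_ c2)
      have : {p : ℂ × ℂ | ∀ w ∈ A, ε ≤ dist p.1 w} = ⋂ w ∈ A, {p : ℂ × ℂ | ε ≤ dist p.1 w} := by
        ext; simp
      change IsClosed {p : ℂ × ℂ | ∀ w ∈ A, ε ≤ dist p.1 w}
      rw [this]
      exact isClosed_biInter fun w _ => isClosed_le (by fun_prop) (by fun_prop)
    · refine (Metric.isBounded_closedBall (x := (0 : ℂ × ℂ)) (r := R + 1)).subset ?_
      rintro ⟨z, s⟩ ⟨h1, -, h3⟩
      simp only at h1 h3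
      have : ‖s‖^2 ≤ (R + 1)^2 := by
        rw [← norm_pow, h1]
        refine (norm_sub_le _ _).trans ?_
        rw [norm_pow, norm_one]
        nlinarith [norm_nonneg z]
      have hs : ‖s‖ ≤ R + 1 := le_of_sq_le_sq this (by positivity)
      rw [mem_closedBall_zero_iff, Prod.norm_def]
      exact max_le (by simp; linarith) hs
  let G : ℂ × ℂ → ℝ := fun p => max (min ‖p.1 - b + p.2‖ ‖p.1 - b - p.2‖) ‖b‖ / 
    max ‖p.1 - b + p.2‖ ‖p.1 - b - p.2‖
  have hMpos : ∀ z s : ℂ, s ^ 2 = z ^ 2 - 1 → (∀ w ∈ A, ε ≤ dist z w) → 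
      0 < max ‖z - b + s‖ ‖z - b - s‖ := fun z s h1 h2 =>
    lt_of_lt_of_le (lt_of_lt_of_le hbpos (le_max_right _ _)) (hlt z s h1 h2).le
  have hG : ContinuousOn G K := by
    refine ContinuousOn.div (by fun_prop) (by fun_prop) ?_
    rintro ⟨z, s⟩ ⟨h1, h2, -⟩
    exact (hMpos z s h1 h2).ne'
  obtain ⟨q, hq1, hq⟩ : ∃ q < 1, ∀ p ∈ K, G p ≤ q := by
    rcases K.eq_empty_or_nonempty with h | h
    · exact ⟨0, by norm_num, by simp [h]⟩
    · obtain ⟨⟨z, s⟩, hp, hmax⟩ := hKc.exists_isMaxOn h hG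
      refine ⟨_, ?_, fun p' hp' => hmax hp'⟩
      obtain ⟨h1, h2, -⟩ := hp
      exact (div_lt_one (hMpos z s h1 h2)).2 (hlt z s h1 h2)
  refine ⟨max q (1/2), by positivity, max_lt hq1 (by norm_num), fun z s h1 h2 => ?_⟩
  have hM := hMpos z s h1 h2
  refine ⟨hM, ?_⟩
  rcases le_total ‖z‖ R with h | h
  · have := hq (z, s) ⟨h1, h2, h⟩
    rw [div_le_iff₀ hM] at this
    refine this.trans ?_
    gcongr
    exact le_max_left _ _
  · obtain ⟨f1, f2⟩ := aux_far b z s h1 h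
    refine le_trans (max_le (f2.trans ?_) (f1.trans ?_))
      (mul_le_mul_of_nonneg_right (le_max_right q (1/2)) hM.le) <;> linarith

/-- Let `b ∈ ℂ` with `−1/2 ≤ Re b < 0` (i.e. `1 < R cos θ ≤ 3/2`). Then all
zeros of `f_n` approach the arc `𝒜` as `n → ∞`: for every `ε > 0` there exists `N` such
that for all `n ≥ N`, every zero of `f_n` lies within distance `ε` of `𝒜`. -/
theorem stmt_16 (b : ℂ) (hb₁ : -1/2 ≤ b.re) (hb₂ : b.re < 0)
    (A : Set ℂ)
    (hA : A = {z : ℂ | ∃ ρ : ℝ, ρ ∈ Set.Icc (0 : ℝ) 1 ∧ ∃ s : ℂ,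
      s ^ 2 = (ρ : ℂ) * (1 - b ^ 2 + b ^ 2 * (ρ : ℂ)) ∧ z = b * (1 - (ρ : ℂ)) + s}) :
    ∀ ε > (0 : ℝ), ∃ N : ℕ, ∀ n : ℕ, N ≤ n →
      ∀ z : ℂ, (∀ s : ℂ, s ^ 2 = z ^ 2 - 1 →
          (z - b + s) ^ n + (z - b - s) ^ n - (-b) ^ n = 0) →
        ∃ w ∈ A, dist z w ≤ ε := by
  intro ε hε
  obtain ⟨q, hq0, hq1, hq⟩ := aux_q b hb₁ hb₂ A hA ε hε
  obtain ⟨N, hN⟩ := exists_pow_lt_of_lt_one (show (0:ℝ) < 1/2 by norm_num) hq1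
  refine ⟨N, fun n hn z hz => ?_⟩
  by_contra! hcon
  obtain ⟨s, hs⟩ := IsAlgClosed.exists_pow_nat_eq (z^2 - 1) (n := 2) (by norm_num)
  have h0 := hz s hs
  obtain ⟨hM, hle⟩ := hq z s hs (fun w hw => (hcon w hw).le)
  have hqn : q ^ n < 1/2 := lt_of_le_of_lt (pow_le_pow_of_le_one hq0 hq1.le hn) hN
  have gen : ∀ u v : ℂ, u ^ n + v ^ n - (-b) ^ n = 0 → 0 < ‖u‖ → ‖v‖ ≤ q * ‖u‖ →
      ‖b‖ ≤ q * ‖u‖ → False := by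
    intro u v h hu hv hb
    have e : u ^ n = (-b)^n - v^n := by linear_combination h
    have h1 : ‖u‖^n ≤ ‖b‖^n + ‖v‖^n := by
      rw [← norm_pow, e]
      refine (norm_sub_le _ _).trans ?_
      simp
    have h2 : ‖b‖^n ≤ q^n * ‖u‖^n := by rw [← mul_pow]; gcongr
    have h3 : ‖v‖^n ≤ q^n * ‖u‖^n := by rw [← mul_pow]; gcongr
    have h4 : 0 < ‖u‖^n := by positivity
    nlinarith
  rcases le_total ‖z - b + s‖ ‖z - b - s‖ with h | h
  · rw [max_eq_right h] at hM
    rw [max_eq_right h, min_eq_left h, max_le_iff] at hle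
    exact gen _ _ (by rw [add_comm ((z - b - s)^n)]; exact h0) hM hle.1 hle.2
  · rw [max_eq_left h] at hM
    rw [max_eq_left h, min_eq_right h, max_le_iff] at hle
    exact gen _ _ h0 hM hle.1 hle.2
end
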